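/- Let d ≥ 3, 0 < λ < d − 2, σ > 0, κ ∈ {1, −1}, T > 0, η > 0, and set p* = d/(d−λ). There exists a constant C* > 0 depending only on d, λ, σ, and for every M > 0 a constant C > 0 depending only on d, λ, σ, T, M and the mollifier χ, such that: for every classical Schwartz-class solution w of ∂_t w = σΔw − κ div(w ∇V^η * w) on [0,T] with ‖w(0)‖_{L^{p*}(ℝ^d)} < C* and ‖w(0)‖_{L¹(ℝ^d)} + ‖w(0)‖_{L^∞(ℝ^d)} ≤ M, one has sup_{0 ≤ t ≤ T} ‖w(t)‖_{L^∞(ℝ^d)} ≤ C; in particular the bound is uniform in η. -/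

import Mathlib

open MeasureTheory Set

noncomputable section

/-- Laplacian of a scalar function on `ℝ^d`. -/
def lapl {d : ℕ} (f : EuclideanSpace ℝ (Fin d) → ℝ) (x : EuclideanSpace ℝ (Fin d)) : ℝ :=
  ∑ i : Fin d, fderiv ℝ (fun y => fderiv ℝ f y (EuclideanSpace.single i 1)) x
    (EuclideanSpace.single i 1)

/-- Divergence of a vector field on `ℝ^d`. -/
def diverg {d : ℕ} (F : EuclideanSpace ℝ (Fin d) → EuclideanSpace ℝ (Fin d))
    (x : EuclideanSpace ℝ (Fin d)) : ℝ :=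
  ∑ i : Fin d, fderiv ℝ (fun y => F y i) x (EuclideanSpace.single i 1)

/-- The mollified Riesz potential `V^η = χ^η * Φ` with `χ^η(x) = η^{-d} χ(x/η)` and
`Φ(x) = |x|^{-λ}`. -/
def Veta {d : ℕ} (lam : ℝ) (χ : EuclideanSpace ℝ (Fin d) → ℝ) (η : ℝ)
    (z : EuclideanSpace ℝ (Fin d)) : ℝ :=
  ∫ y, (η ^ (-(d : ℝ)) * χ (η⁻¹ • (z - y))) * ‖y‖ ^ (-lam)

/-- A classical Schwartz-class solution of `∂_t w = σΔw − κ div(w (K * w))` on `[0,T]`,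
where `(K * w)(x) = ∫ K(x−y) w(y) dy` for a vector-valued interaction kernel `K`
(in the application, `K = ∇V^η` or `K = ∇Φ`): `(t,x) ↦ w(t,x)` is smooth,
`w(t,·)` is a Schwartz function for every `t ∈ [0,T]`, `w ≥ 0`, `∫ w(t,x) dx = 1`,
and the equation holds pointwise. -/
def IsAggregationSolution {d : ℕ} (σ κ T : ℝ)
    (K : EuclideanSpace ℝ (Fin d) → EuclideanSpace ℝ (Fin d))
    (w : ℝ → EuclideanSpace ℝ (Fin d) → ℝ) : Prop :=
  ContDiffOn ℝ (⊤ : ℕ∞) (fun p : ℝ × EuclideanSpace ℝ (Fin d) => w p.1 p.2) (Icc 0 T ×ˢ univ) ∧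
  (∀ t ∈ Icc (0:ℝ) T, ∃ S : SchwartzMap (EuclideanSpace ℝ (Fin d)) ℝ, ∀ x, w t x = S x) ∧
  (∀ t ∈ Icc (0:ℝ) T, ∀ x, 0 ≤ w t x) ∧
  (∀ t ∈ Icc (0:ℝ) T, (∫ x, w t x) = 1) ∧
  (∀ t ∈ Icc (0:ℝ) T, ∀ x, HasDerivWithinAt (fun s => w s x)
    (σ * lapl (w t) x - κ * diverg (fun z => w t z • ∫ y, w t y • K (z - y)) x)
    (Icc 0 T) t)



/-- Euclidean space. -/
abbrev Eu (d : ℕ) := EuclideanSpace ℝ (Fin d)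

/-- Unnormalized Gaussian. -/
def gk {d : ℕ} (τ : ℝ) (x : Eu d) : ℝ := τ ^ (-(d : ℝ) / 2) * Real.exp (-(τ⁻¹ * ‖x‖ ^ 2))

lemma gk_pos {d : ℕ} {τ : ℝ} (hτ : 0 < τ) (x : Eu d) : 0 < gk τ x := by
  unfold gk; positivity

lemma gk_le {d : ℕ} {τ : ℝ} (hτ : 0 < τ) (x : Eu d) : gk τ x ≤ τ ^ (-(d : ℝ) / 2) := by
  unfold gk
  have : Real.exp (-(τ⁻¹ * ‖x‖ ^ 2)) ≤ 1 := by
    rw [Real.exp_le_one_iff]; have : 0 ≤ τ⁻¹ * ‖x‖ ^ 2 := by positivity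
    linarith
  exact mul_le_of_le_one_right (by positivity) this

lemma gk_cont {d : ℕ} (τ : ℝ) : Continuous (gk τ : Eu d → ℝ) := by
  unfold gk; fun_prop

lemma integral_exp_sq {d : ℕ} {b : ℝ} (hb : 0 < b) :
    ∫ y : Eu d, Real.exp (-(b * ‖y‖ ^ 2)) = (Real.pi / b) ^ ((d : ℝ) / 2) := by
  have := GaussianFourier.integral_rexp_neg_mul_sq_norm (V := Eu d) hb
  simpa [neg_mul] using this

lemma integrable_exp_sq {d : ℕ} {b : ℝ} (hb : 0 < b) :
    Integrable (fun y : Eu d => Real.exp (-(b * ‖y‖ ^ 2))) := by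
  apply Integrable.of_integral_ne_zero
  rw [integral_exp_sq hb]
  have : 0 < Real.pi := Real.pi_pos
  positivity

lemma gk_integrable {d : ℕ} {τ : ℝ} (hτ : 0 < τ) : Integrable (gk τ : Eu d → ℝ) := by
  unfold gk
  exact (integrable_exp_sq (inv_pos.2 hτ)).const_mul _

lemma gk_integral {d : ℕ} {τ : ℝ} (hτ : 0 < τ) :
    ∫ y : Eu d, gk τ y = Real.pi ^ ((d : ℝ) / 2) := by
  unfold gk
  rw [integral_const_mul, integral_exp_sq (inv_pos.2 hτ), div_inv_eq_mul,
    Real.mul_rpow Real.pi_pos.le hτ.le, neg_div, Real.rpow_neg hτ.le]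
  have : 0 < τ ^ ((d : ℝ) / 2) := by positivity
  field_simp

lemma gk_grad {d : ℕ} {r : ℝ} (hr : 0 < r) (x : Eu d) :
    2 / r * ‖x‖ * gk r x ≤ 2 * 2 ^ ((d : ℝ) / 2) * r ^ (-(1 : ℝ) / 2) * gk (2 * r) x := by
  unfold gk
  have h1 : (2 * r) ^ (-(d : ℝ) / 2) = (2 ^ ((d : ℝ) / 2))⁻¹ * r ^ (-(d : ℝ) / 2) := by
    rw [Real.mul_rpow (by norm_num) hr.le, neg_div, Real.rpow_neg (by norm_num)]
  have h2 : r ^ (-(1 : ℝ) / 2) = (√r)⁻¹ := by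
    rw [neg_div, Real.rpow_neg hr.le, Real.sqrt_eq_rpow]
  rw [h1, h2]
  have h3 : 0 < (2 : ℝ) ^ ((d : ℝ) / 2) := by positivity
  set A := (2 : ℝ) ^ ((d : ℝ) / 2)
  have h4 : 0 < r ^ (-(d : ℝ) / 2) := by positivity
  set B := r ^ (-(d : ℝ) / 2)
  have hs : 0 < √r := Real.sqrt_pos.2 hr
  have hsq : √r * √r = r := Real.mul_self_sqrt hr.le
  set u := ‖x‖ / √r with hu
  have e1 : r⁻¹ * ‖x‖ ^ 2 = u ^ 2 := by rw [hu, div_pow, Real.sq_sqrt hr.le]; field_simp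
  have e2 : (2 * r)⁻¹ * ‖x‖ ^ 2 = u ^ 2 / 2 := by rw [← e1]; field_simp
  have e3 : ‖x‖ = u * √r := by rw [hu]; field_simp
  rw [e1, e2, e3]
  have key : u * Real.exp (-u ^ 2) ≤ Real.exp (-(u ^ 2 / 2)) := by
    have : Real.exp (-u ^ 2) = Real.exp (-(u ^ 2 / 2)) * Real.exp (-(u ^ 2 / 2)) := by
      rw [← Real.exp_add]; ring_nf
    rw [this]
    have h5 : u ≤ Real.exp (u ^ 2 / 2) := by
      have := Real.add_one_le_exp (u ^ 2 / 2)
      nlinarith [sq_nonneg (u - 1)]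
    have h6 : u * Real.exp (-(u ^ 2 / 2)) ≤ 1 := by
      rw [Real.exp_neg]
      rw [← div_eq_mul_inv, div_le_one (Real.exp_pos _)]; exact h5
    nlinarith [Real.exp_pos (-(u ^ 2 / 2))]
  have L : 2 / r * (u * √r) * (B * Real.exp (-u ^ 2)) = 2 * (√r)⁻¹ * B * (u * Real.exp (-u ^ 2)) := by
    have q : 2 / r * √r = 2 * (√r)⁻¹ := by
      rw [div_mul_eq_mul_div, div_eq_iff hr.ne']
      calc 2 * √r = 2 * (√r)⁻¹ * (√r * √r) := by field_simp
        _ = _ := by rw [hsq]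
    calc _ = (2 / r * √r) * B * (u * Real.exp (-u ^ 2)) := by ring
      _ = _ := by rw [q]
  have R : 2 * A * (√r)⁻¹ * (A⁻¹ * B * Real.exp (-(u ^ 2 / 2))) =
    2 * (√r)⁻¹ * B * Real.exp (-(u ^ 2 / 2)) := by field_simp
  rw [L, R]
  gcongr

/-- convolution with the Gaussian -/
def gc {d : ℕ} (τ : ℝ) (f : Eu d → ℝ) (x : Eu d) : ℝ := ∫ y, gk τ (x - y) * f y

lemma gc_int {d : ℕ} {τ : ℝ} (hτ : 0 < τ) {f : Eu d → ℝ} (hf : Integrable f) (x : Eu d) :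
    Integrable (fun y => gk τ (x - y) * f y) := by
  apply hf.bdd_mul (c := τ ^ (-(d : ℝ) / 2))
  · exact ((gk_cont τ).comp (by fun_prop)).aestronglyMeasurable
  · refine Filter.Eventually.of_forall fun y => ?_
    rw [Real.norm_eq_abs, abs_of_pos (gk_pos hτ _)]
    exact gk_le hτ _

lemma gc_le {d : ℕ} {τ : ℝ} (hτ : 0 < τ) {f : Eu d → ℝ} (hf : Integrable f) (hf0 : ∀ x, 0 ≤ f x)
    (hf1 : ∫ x, f x = 1) (x : Eu d) : gc τ f x ≤ τ ^ (-(d : ℝ) / 2) := by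
  unfold gc
  calc _ ≤ ∫ y, τ ^ (-(d : ℝ) / 2) * f y := by
        apply integral_mono (gc_int hτ hf x) (hf.const_mul _)
        intro y
        exact mul_le_mul_of_nonneg_right (gk_le hτ _) (hf0 y)
    _ = _ := by rw [integral_const_mul, hf1, mul_one]

lemma gc_le_sup {d : ℕ} {τ M : ℝ} (hτ : 0 < τ) {f : Eu d → ℝ} (hf : Integrable f)
    (hM : ∀ x, f x ≤ M) (x : Eu d) : gc τ f x ≤ M * Real.pi ^ ((d : ℝ) / 2) := by
  unfold gc
  calc _ ≤ ∫ y, M * gk τ (x - y) := by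
        apply integral_mono (gc_int hτ hf x) (((gk_integrable hτ).comp_sub_left x).const_mul _)
        intro y
        simp only
        rw [mul_comm M]
        exact mul_le_mul_of_nonneg_left (hM y) (gk_pos hτ _).le
    _ = _ := by rw [integral_const_mul, integral_sub_left_eq_self, gk_integral hτ]

/-- Approximate identity. -/
lemma gc_limit {d : ℕ} {C : ℝ} {f : Eu d → ℝ} (hf : Integrable f) (hc : Continuous f)
    (x : Eu d) (h : ∀ τ, 0 < τ → gc τ f x ≤ C * Real.pi ^ ((d : ℝ) / 2)) : f x ≤ C := by
  have hpi : 0 < Real.pi ^ ((d : ℝ) / 2) := by have := Real.pi_pos; positivity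
  set P := Real.pi ^ ((d : ℝ) / 2)
  have := tendsto_integral_comp_smul_smul_of_integrable' (μ := (volume : Measure (Eu d)))
    (φ := fun y => P⁻¹ * gk 1 y) (fun y => by have := gk_pos one_pos y; positivity)
    (by rw [integral_const_mul, gk_integral one_pos]; exact inv_mul_cancel₀ hpi.ne')
    (by
      have h0 : Filter.Tendsto (fun t : ℝ => t ^ d * (P⁻¹ * Real.exp (-(t^2)))) Filter.atTop (nhds 0) := by
        have h1 := (Real.tendsto_pow_mul_exp_neg_atTop_nhds_zero d).const_mul P⁻¹
        rw [mul_zero] at h1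
        refine squeeze_zero' ?_ ?_ h1
        · filter_upwards [Filter.eventually_ge_atTop 1] with t ht; positivity
        · filter_upwards [Filter.eventually_ge_atTop 1] with t ht
          have : Real.exp (-(t^2)) ≤ Real.exp (-t) := by
            apply Real.exp_le_exp.2; nlinarith
          calc t ^ d * (P⁻¹ * Real.exp (-(t^2))) = P⁻¹ * (t ^ d * Real.exp (-(t^2))) := by ring
            _ ≤ _ := by gcongr
      have := h0.comp (tendsto_norm_cobounded_atTop (E := Eu d))
      refine this.congr fun y => ?_
      simp [gk])
    hf (x₀ := x) hc.continuousAt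
  refine le_of_tendsto this ?_
  filter_upwards [Filter.eventually_gt_atTop 0] with c hc
  have h2 := h ((c ^ 2)⁻¹) (by positivity)
  have : ∫ y, (c ^ (Module.finrank ℝ (Eu d)) * (P⁻¹ * gk 1 (c • (x - y)))) • f y
      = P⁻¹ * gc ((c^2)⁻¹) f x := by
    unfold gc
    rw [← integral_const_mul]
    congr 1; ext y
    have e : ((c ^ 2)⁻¹) ^ (-(d : ℝ) / 2) = c ^ d := by
      rw [neg_div, Real.rpow_neg (by positivity), ← Real.inv_rpow (by positivity), inv_inv,
        ← Real.rpow_natCast c 2, ← Real.rpow_mul hc.le, ← Real.rpow_natCast c d]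
      congr 1; push_cast; ring
    simp only [gk, e, norm_smul, finrank_euclideanSpace_fin, smul_eq_mul, Real.one_rpow, inv_inv,
      Real.norm_eq_abs, abs_of_pos hc, inv_one, mul_pow, one_mul]
    ring
  rw [this]
  calc P⁻¹ * gc ((c^2)⁻¹) f x ≤ P⁻¹ * (C * P) := by gcongr
    _ = C := by field_simp

/-- basis vector -/
abbrev eb {d : ℕ} (i : Fin d) : Eu d := EuclideanSpace.single i 1

lemma gk_smooth {d : ℕ} (r : ℝ) (x : Eu d) : ContDiff ℝ (⊤ : ℕ∞) (fun y => gk r (x - y)) := by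
  unfold gk
  have : ContDiff ℝ (⊤ : ℕ∞) (fun y : Eu d => ‖x - y‖ ^ 2) :=
    (contDiff_const.sub contDiff_id).norm_sq ℝ
  fun_prop

lemma gk_hasFDerivAt {d : ℕ} (r : ℝ) (x y : Eu d) :
    HasFDerivAt (fun y => gk r (x - y)) ((2 / r * gk r (x - y)) • (innerSL ℝ (x - y))) y := by
  unfold gk
  have h1 : HasFDerivAt (fun y : Eu d => x - y) (-(ContinuousLinearMap.id ℝ (Eu d))) y :=
    (hasFDerivAt_id y).const_sub x
  have h2 := h1.norm_sq
  have h3 := ((h2.const_mul r⁻¹).neg.exp).const_mul (r ^ (-(d : ℝ) / 2))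
  refine h3.congr_fderiv ?_
  ext v
  simp
  ring

lemma gk_pd {d : ℕ} (r : ℝ) (x y : Eu d) (i : Fin d) :
    fderiv ℝ (fun y => gk r (x - y)) y (eb i) = 2 / r * (x i - y i) * gk r (x - y) := by
  rw [(gk_hasFDerivAt r x y).fderiv]
  simp [EuclideanSpace.inner_single_right]
  ring

lemma gk_pd2 {d : ℕ} (r : ℝ) (x y : Eu d) (i : Fin d) :
    fderiv ℝ (fun z => fderiv ℝ (fun y => gk r (x - y)) z (eb i)) y (eb i) =
      (-(2 / r) + 4 / r ^ 2 * (x i - y i) ^ 2) * gk r (x - y) := by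
  have : (fun z => fderiv ℝ (fun y => gk r (x - y)) z (eb i)) =
      fun z => (2 / r * (x i - z i)) * gk r (x - z) := by
    ext z; exact gk_pd r x z i
  rw [this]
  have h0 : HasFDerivAt (fun z : Eu d => z i) (EuclideanSpace.proj i : Eu d →L[ℝ] ℝ) y :=
    (EuclideanSpace.proj i : Eu d →L[ℝ] ℝ).hasFDerivAt
  have h1 := ((h0.const_sub (x i)).const_mul (2 / r)).mul (gk_hasFDerivAt r x y)
  erw [h1.fderiv]
  simp [EuclideanSpace.inner_single_right]
  ring

lemma gk_lapl {d : ℕ} (r : ℝ) (x y : Eu d) :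
    lapl (fun y => gk r (x - y)) y = (-(2 * d / r) + 4 / r ^ 2 * ‖x - y‖ ^ 2) * gk r (x - y) := by
  unfold lapl
  simp_rw [gk_pd2]
  rw [← Finset.sum_mul, Finset.sum_add_distrib, ← Finset.mul_sum, EuclideanSpace.norm_sq_eq]
  simp
  ring_nf
  simp

lemma gk_time {d : ℕ} {r : ℝ} (hr : 0 < r) (z : Eu d) :
    HasDerivAt (fun r => gk r z) ((-(d / (2 * r)) + ‖z‖ ^ 2 / r ^ 2) * gk r z) r := by
  unfold gk
  have h1 := Real.hasDerivAt_rpow_const (x := r) (p := -(d : ℝ) / 2) (Or.inl hr.ne')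
  have h2 := (((hasDerivAt_inv hr.ne').mul_const (‖z‖ ^ 2)).neg).exp
  refine (h1.mul h2).congr_deriv ?_
  rw [Real.rpow_sub_one hr.ne']
  simp only [Pi.neg_apply]
  field_simp

lemma pd_smooth {d : ℕ} {φ : Eu d → ℝ} (hφ : ContDiff ℝ (⊤ : ℕ∞) φ) (v : Eu d) :
    ContDiff ℝ (⊤ : ℕ∞) (fun z => fderiv ℝ φ z v) := by
  exact (hφ.fderiv_right (m := (⊤ : ℕ∞)) (by simp)).clm_apply contDiff_const

lemma lapl_mul {d : ℕ} {φ g : Eu d → ℝ} (hφ : ContDiff ℝ (⊤ : ℕ∞) φ)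
    (hg : ContDiff ℝ (⊤ : ℕ∞) g) (y : Eu d) :
    lapl (fun y => φ y * g y) y = φ y * lapl g y +
      2 * ∑ i, fderiv ℝ φ y (eb i) * fderiv ℝ g y (eb i) + g y * lapl φ y := by
  have hφd := hφ.differentiable (by simp)
  have hgd := hg.differentiable (by simp)
  unfold lapl
  rw [Finset.mul_sum, Finset.mul_sum, Finset.mul_sum, ← Finset.sum_add_distrib,
    ← Finset.sum_add_distrib]
  refine Finset.sum_congr rfl fun i _ => ?_
  have : (fun z => fderiv ℝ (fun y => φ y * g y) z (eb i)) =
      fun z => φ z * fderiv ℝ g z (eb i) + g z * fderiv ℝ φ z (eb i) := by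
    ext z
    rw [fderiv_fun_mul (hφd z) (hgd z)]; simp
  rw [this]
  have a1 := (pd_smooth hφ (eb i)).differentiable (by simp) y
  have a2 := (pd_smooth hg (eb i)).differentiable (by simp) y
  rw [fderiv_fun_add ((hφd y).fun_mul a2) ((hgd y).fun_mul a1), fderiv_fun_mul (hφd y) a2,
    fderiv_fun_mul (hgd y) a1]
  simp
  ring

lemma ibp {d : ℕ} {ψ f : Eu d → ℝ} (hψ : ContDiff ℝ 1 ψ) (hc : HasCompactSupport ψ)
    (hf : ContDiff ℝ 1 f) (v : Eu d) :
    ∫ x, ψ x * fderiv ℝ f x v = - ∫ x, fderiv ℝ ψ x v * f x := by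
  have c1 : Continuous (fun x => fderiv ℝ f x v) :=
    (hf.continuous_fderiv (by simp)).clm_apply continuous_const
  have c2 : Continuous (fun x => fderiv ℝ ψ x v) :=
    (hψ.continuous_fderiv (by simp)).clm_apply continuous_const
  have s2 : HasCompactSupport (fun x => fderiv ℝ ψ x v) := hc.fderiv_apply (𝕜 := ℝ) v
  apply integral_mul_fderiv_eq_neg_fderiv_mul_of_integrable
  · exact (c2.mul hf.continuous).integrable_of_hasCompactSupport s2.mul_right
  · exact (hψ.continuous.mul c1).integrable_of_hasCompactSupport hc.mul_right
  · exact (hψ.continuous.mul hf.continuous).integrable_of_hasCompactSupport hc.mul_right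
  · exact fun x _ => hψ.differentiable (by simp) x
  · exact fun x _ => hf.differentiable (by simp) x

lemma ibp_lapl {d : ℕ} {ψ f : Eu d → ℝ} (hψ : ContDiff ℝ (⊤ : ℕ∞) ψ) (hc : HasCompactSupport ψ)
    (hf : ContDiff ℝ (⊤ : ℕ∞) f) :
    ∫ x, ψ x * lapl f x = ∫ x, lapl ψ x * f x := by
  have one_le : (1 : WithTop ℕ∞) ≤ ((⊤ : ℕ∞) : WithTop ℕ∞) := by exact_mod_cast le_top
  unfold lapl
  simp_rw [Finset.mul_sum, Finset.sum_mul]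
  rw [integral_finsetSum, integral_finsetSum]
  · refine Finset.sum_congr rfl fun i _ => ?_
    rw [ibp (hψ.of_le one_le) hc ((pd_smooth hf _).of_le one_le)]
    have h2 := ibp ((pd_smooth hψ (eb i)).of_le one_le) (hc.fderiv_apply (𝕜 := ℝ) (eb i))
      (hf.of_le one_le) (eb i)
    simp only [eb] at h2
    rw [h2, neg_neg]
  · intro i _
    refine Continuous.integrable_of_hasCompactSupport
      ((pd_smooth (pd_smooth hψ _) _).continuous.mul hf.continuous) ?_
    exact ((hc.fderiv_apply (𝕜 := ℝ) (eb i)).fderiv_apply (𝕜 := ℝ) (eb i)).mul_right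
  · intro i _
    refine Continuous.integrable_of_hasCompactSupport
      (hψ.continuous.mul (pd_smooth (pd_smooth hf _) _).continuous) hc.mul_right

lemma ibp_div {d : ℕ} {ψ : Eu d → ℝ} {F : Eu d → Eu d} (hψ : ContDiff ℝ 1 ψ)
    (hc : HasCompactSupport ψ) (hF : ContDiff ℝ 1 F) :
    ∫ x, ψ x * diverg F x = - ∫ x, ∑ i, fderiv ℝ ψ x (eb i) * F x i := by
  have hFi : ∀ i, ContDiff ℝ 1 (fun y => F y i) := fun i =>
    (EuclideanSpace.proj i : Eu d →L[ℝ] ℝ).contDiff.comp hF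
  have c1 : ∀ i, Continuous (fun x => fderiv ℝ (fun y => F y i) x (eb i)) := fun i =>
    ((hFi i).continuous_fderiv (by simp)).clm_apply continuous_const
  have c2 : ∀ i : Fin d, Continuous (fun x => fderiv ℝ ψ x (eb i)) := fun i =>
    (hψ.continuous_fderiv (by simp)).clm_apply continuous_const
  unfold diverg
  simp_rw [Finset.mul_sum]
  rw [integral_finsetSum, integral_finsetSum, ← Finset.sum_neg_distrib]
  · refine Finset.sum_congr rfl fun i _ => ?_
    exact ibp hψ hc (hFi i) (eb i)
  · intro i _
    exact ((c2 i).mul (hFi i).continuous).integrable_of_hasCompactSupport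
      (hc.fderiv_apply (𝕜 := ℝ) (eb i)).mul_right
  · intro i _
    exact (hψ.continuous.mul (c1 i)).integrable_of_hasCompactSupport hc.mul_right

/-- cutoffs -/
lemma cutoff (d : ℕ) : ∃ C : ℝ, 0 ≤ C ∧ ∀ R : ℝ, 1 ≤ R → ∃ φ : Eu d → ℝ,
    ContDiff ℝ (⊤ : ℕ∞) φ ∧ HasCompactSupport φ ∧ (∀ y, 0 ≤ φ y) ∧ (∀ y, φ y ≤ 1) ∧
    (∀ y, ‖y‖ ≤ R → φ y = 1) ∧ (∀ y i, |fderiv ℝ φ y (eb i)| ≤ C / R) ∧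
    (∀ y, |lapl φ y| ≤ C / R) := by
  let f : ContDiffBump (0 : Eu d) := ⟨1, 2, one_pos, one_lt_two⟩
  have hfs : ContDiff ℝ (⊤ : ℕ∞) f := f.contDiff
  have hfc : HasCompactSupport f := f.hasCompactSupport
  have b1 : ∀ i : Fin d, ∃ C, ∀ y, ‖fderiv ℝ f y (eb i)‖ ≤ C := fun i =>
    (pd_smooth hfs _).continuous.bounded_above_of_compact_support (hfc.fderiv_apply (𝕜 := ℝ) (eb i))
  choose C1 hC1 using b1
  have b2 : ∀ i : Fin d, ∃ C, ∀ y, ‖fderiv ℝ (fun z => fderiv ℝ f z (eb i)) y (eb i)‖ ≤ C :=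
    fun i => (pd_smooth (pd_smooth hfs _) _).continuous.bounded_above_of_compact_support
      ((hfc.fderiv_apply (𝕜 := ℝ) (eb i)).fderiv_apply (𝕜 := ℝ) (eb i))
  choose C2 hC2 using b2
  refine ⟨∑ i, |C1 i| + ∑ i, |C2 i|, by positivity, fun R hR => ?_⟩
  have hR0 : 0 < R := by linarith
  have hsc : ∀ (h : Eu d → ℝ), Differentiable ℝ h → ∀ y v,
      fderiv ℝ (fun y => h (R⁻¹ • y)) y v = R⁻¹ * fderiv ℝ h (R⁻¹ • y) v := by
    intro h hh y v
    have h1 : HasFDerivAt (fun y : Eu d => R⁻¹ • y) (R⁻¹ • ContinuousLinearMap.id ℝ (Eu d)) y :=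
      (hasFDerivAt_id y).const_smul R⁻¹
    have h2 := (hh (R⁻¹ • y)).hasFDerivAt.comp y h1
    erw [h2.fderiv]
    simp
  have e1 : ∀ y (i : Fin d), fderiv ℝ (fun y => f (R⁻¹ • y)) y (eb i)
      = R⁻¹ * fderiv ℝ f (R⁻¹ • y) (eb i) := fun y i =>
    hsc f (hfs.differentiable (by simp)) y _
  have s1 : 0 ≤ ∑ i, |C1 i| := by positivity
  have s2 : 0 ≤ ∑ i, |C2 i| := by positivity
  refine ⟨fun y => f (R⁻¹ • y), hfs.comp (contDiff_const_smul _), ?_, fun y => f.nonneg,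
    fun y => f.le_one, ?_, ?_, ?_⟩
  · exact hfc.comp_smul (inv_ne_zero hR0.ne')
  · intro y hy
    apply f.one_of_mem_closedBall
    simp only [Metric.mem_closedBall, dist_zero_right, norm_smul, norm_inv, Real.norm_eq_abs,
      abs_of_pos hR0]
    rw [inv_mul_le_iff₀ hR0]; simpa [f] using hy
  · intro y i
    rw [e1, abs_mul, abs_of_pos (inv_pos.2 hR0), div_eq_inv_mul]
    gcongr
    have := hC1 i (R⁻¹ • y)
    have h3 : |C1 i| ≤ ∑ i, |C1 i| :=
      Finset.single_le_sum (f := fun i => |C1 i|) (fun _ _ => abs_nonneg _) (Finset.mem_univ i)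
    rw [Real.norm_eq_abs] at this
    linarith [le_abs_self (C1 i)]
  · intro y
    unfold lapl
    have e2 : ∀ i : Fin d, fderiv ℝ (fun y_1 => fderiv ℝ (fun y => f (R⁻¹ • y)) y_1 (eb i)) y (eb i)
       = R⁻¹ * (R⁻¹ * fderiv ℝ (fun z => fderiv ℝ f z (eb i)) (R⁻¹ • y) (eb i)) := by
      intro i
      simp_rw [e1]
      have d1 := (pd_smooth hfs (eb i)).differentiable (by simp)
      rw [fderiv_const_mul (a := fun z => fderiv ℝ f (R⁻¹ • z) (eb i))]
      · rw [smul_apply, hsc _ d1, smul_eq_mul]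
      · exact (d1.comp (differentiable_id.const_smul R⁻¹)) y
    rw [Finset.sum_congr rfl fun i _ => e2 i, ← Finset.mul_sum, abs_mul,
      abs_of_pos (inv_pos.2 hR0), div_eq_inv_mul]
    gcongr
    calc _ ≤ ∑ i, |R⁻¹ * fderiv ℝ (fun z => fderiv ℝ f z (eb i)) (R⁻¹ • y) (eb i)| :=
          Finset.abs_sum_le_sum_abs _ _
      _ ≤ ∑ i, |C2 i| := by
        refine Finset.sum_le_sum fun i _ => ?_
        rw [abs_mul, abs_of_pos (inv_pos.2 hR0)]
        have := hC2 i (R⁻¹ • y)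
        rw [Real.norm_eq_abs] at this
        have h4 : R⁻¹ ≤ 1 := inv_le_one_of_one_le₀ hR
        calc _ ≤ 1 * |fderiv ℝ (fun z => fderiv ℝ f z (eb i)) (R⁻¹ • y) (eb i)| := by gcongr
          _ ≤ |C2 i| := by linarith [le_abs_self (C2 i)]
      _ ≤ _ := by linarith

/-- Abstract linear drift-diffusion solution. -/
structure LinSol {d : ℕ} (σ κ T K : ℝ) (b : ℝ → Eu d → Eu d) (w : ℝ → Eu d → ℝ) : Prop where
  smooth : ContDiffOn ℝ (⊤ : ℕ∞) (fun p : ℝ × Eu d => w p.1 p.2) (Icc 0 T ×ˢ univ)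
  wsm : ∀ t ∈ Icc (0:ℝ) T, ContDiff ℝ (⊤ : ℕ∞) (w t)
  wint : ∀ t ∈ Icc (0:ℝ) T, Integrable (w t)
  nonneg : ∀ t ∈ Icc (0:ℝ) T, ∀ x, 0 ≤ w t x
  mass : ∀ t ∈ Icc (0:ℝ) T, (∫ x, w t x) = 1
  bsm : ∀ t ∈ Icc (0:ℝ) T, ContDiff ℝ 1 (b t)
  bK : ∀ t ∈ Icc (0:ℝ) T, ∀ x, ‖b t x‖ ≤ K
  eqn : ∀ t ∈ Icc (0:ℝ) T, ∀ x, HasDerivWithinAt (fun s => w s x)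
    (σ * lapl (w t) x - κ * diverg (fun z => w t z • b t z) x) (Icc 0 T) t

lemma deriv_under {d : ℕ} {f f' : ℝ → Eu d → ℝ} {a b s0 : ℝ} (hs0 : s0 ∈ Ioo a b)
    {k : Set (Eu d)} (hk : IsCompact k)
    (hf : ContinuousOn (Function.uncurry f) (Ioo a b ×ˢ univ))
    (hf' : ContinuousOn (Function.uncurry f') (Ioo a b ×ˢ univ))
    (hd : ∀ s ∈ Ioo a b, ∀ y, HasDerivAt (fun s => f s y) (f' s y) s)
    (h0 : ∀ s ∈ Ioo a b, ∀ y, y ∉ k → f s y = 0)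
    (h0' : ∀ s ∈ Ioo a b, ∀ y, y ∉ k → f' s y = 0) :
    HasDerivAt (fun s => ∫ y, f s y) (∫ y, f' s0 y) s0 := by
  obtain ⟨ε, hε, hsub⟩ := Metric.nhds_basis_closedBall.mem_iff.1 (isOpen_Ioo.mem_nhds hs0)
  have hcomp : IsCompact (Metric.closedBall s0 ε ×ˢ k) := (isCompact_closedBall s0 ε).prod hk
  obtain ⟨C, hC⟩ := hcomp.exists_bound_of_continuousOn
    (hf'.mono (prod_mono hsub (subset_univ k)))
  have cont : ∀ g : ℝ → Eu d → ℝ, ContinuousOn (Function.uncurry g) (Ioo a b ×ˢ univ) →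
      ∀ s ∈ Ioo a b, Continuous (g s) := by
    intro g hg s hs
    exact hg.comp_continuous (f := fun y => (s, y)) (by fun_prop) (fun y => ⟨hs, mem_univ _⟩)
  refine (hasDerivAt_integral_of_dominated_loc_of_deriv_le
    (bound := k.indicator (fun _ => |C|)) (Metric.closedBall_mem_nhds s0 hε) ?_ ?_ ?_ ?_ ?_ ?_).2
  · filter_upwards [isOpen_Ioo.mem_nhds hs0] with s hs
    exact (cont f hf s hs).aestronglyMeasurable
  · exact (cont f hf s0 hs0).integrable_of_hasCompactSupport
      (HasCompactSupport.intro hk fun y hy => h0 s0 hs0 y hy)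
  · exact (cont f' hf' s0 hs0).aestronglyMeasurable
  · refine Filter.Eventually.of_forall fun y s hs => ?_
    by_cases hy : y ∈ k
    · rw [indicator_of_mem hy]
      exact (hC (s, y) ⟨hs, hy⟩).trans (le_abs_self C)
    · rw [indicator_of_notMem hy, h0' s (hsub hs) y hy, norm_zero]
  · rw [integrable_indicator_iff hk.measurableSet]
    exact integrableOn_const hk.measure_lt_top.ne
  · exact Filter.Eventually.of_forall fun y s hs => hd s (hsub hs) y

lemma int3 {d : ℕ} {A B C : Eu d → ℝ} (hA : Integrable A) (hB : Integrable B) (hC : Integrable C)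
    {p q : ℝ} : (∫ y, A y) + p * (∫ y, B y) + q * (∫ y, C y) = ∫ y, (A y + p * B y + q * C y) := by
  have h1 : ∫ y, (A y + p * B y) = (∫ y, A y) + ∫ y, p * B y := integral_add hA (hB.const_mul p)
  have h2 : ∫ y, (A y + p * B y + q * C y) = (∫ y, (A y + p * B y)) + ∫ y, q * C y :=
    integral_add (hA.add (hB.const_mul p)) (hC.const_mul q)
  rw [h2, h1, integral_const_mul, integral_const_mul]

/-- Derivative of the localized Gaussian average. -/
lemma energy_deriv {d : ℕ} {σ κ T K : ℝ} {b : ℝ → Eu d → Eu d} {w : ℝ → Eu d → ℝ}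
    (H : LinSol σ κ T K b w) {t1 t2 τ : ℝ} (hσ : 0 < σ) (h1 : 0 ≤ t1) (h2 : t2 ≤ T)
    (hτ : 0 < τ) (x : Eu d) {φ : Eu d → ℝ} (hφ : ContDiff ℝ (⊤ : ℕ∞) φ)
    (hφc : HasCompactSupport φ) {s : ℝ} (hs : s ∈ Ioo t1 t2) :
    HasDerivAt (fun s => ∫ y, φ y * gk (4 * σ * (t2 - s) + τ) (x - y) * w s y)
      (∫ y, (σ * (2 * ∑ i, fderiv ℝ φ y (eb i) *
          (2 / (4 * σ * (t2 - s) + τ) * (x i - y i) * gk (4 * σ * (t2 - s) + τ) (x - y))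
          + gk (4 * σ * (t2 - s) + τ) (x - y) * lapl φ y)
        + κ * ∑ i, (φ y * (2 / (4 * σ * (t2 - s) + τ) * (x i - y i) *
            gk (4 * σ * (t2 - s) + τ) (x - y))
          + gk (4 * σ * (t2 - s) + τ) (x - y) * fderiv ℝ φ y (eb i)) * b s y i) * w s y) s := by
  have hIoo : Ioo t1 t2 ⊆ Ioo 0 T := Ioo_subset_Ioo h1 h2
  have hsT : s ∈ Icc (0:ℝ) T := Ioo_subset_Icc_self (hIoo hs)
  set r : ℝ → ℝ := fun s => 4 * σ * (t2 - s) + τ with hr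
  have hrpos : ∀ s ∈ Ioo t1 t2, 0 < r s := fun s hs => by
    have : 0 < σ * (t2 - s) := mul_pos hσ (by linarith [hs.2])
    simp only [hr]; nlinarith
  set U : ℝ × Eu d → ℝ := fun p => w p.1 p.2
  have hopen : IsOpen (Ioo t1 t2 ×ˢ (univ : Set (Eu d))) := isOpen_Ioo.prod isOpen_univ
  have hU : ContDiffOn ℝ (⊤ : ℕ∞) U (Ioo t1 t2 ×ˢ univ) :=
    H.smooth.mono (prod_mono (hIoo.trans Ioo_subset_Icc_self) subset_rfl)
  have hUf : ContinuousOn (fun p => fderiv ℝ U p (1, 0)) (Ioo t1 t2 ×ˢ univ) :=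
    (hU.continuousOn_fderiv_of_isOpen hopen (by simp)).clm_apply continuousOn_const
  have hUd : ∀ s ∈ Ioo t1 t2, ∀ y, HasDerivAt (fun s => w s y) (fderiv ℝ U (s, y) (1, 0)) s := by
    intro s hs y
    have hd : DifferentiableAt ℝ U (s, y) :=
      (hU.differentiableOn (by simp)).differentiableAt (hopen.mem_nhds ⟨hs, mem_univ _⟩)
    have h3 : HasDerivAt (fun s : ℝ => (s, y)) ((1 : ℝ), (0 : Eu d)) s :=
      (hasDerivAt_id s).prodMk (hasDerivAt_const s y)
    exact hd.hasFDerivAt.comp_hasDerivAt s h3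
  have hUeq : ∀ y, fderiv ℝ U (s, y) (1, 0) =
      σ * lapl (w s) y - κ * diverg (fun z => w s z • b s z) y := by
    intro y
    have := (H.eqn s hsT y).hasDerivAt (Icc_mem_nhds (hIoo hs).1 (hIoo hs).2)
    exact (hUd s hs y).unique this
  have hgc : ContinuousOn (fun p : ℝ × Eu d => gk (r p.1) (x - p.2)) (Ioo t1 t2 ×ˢ univ) := by
    unfold gk
    have hrc : ContinuousOn (fun p : ℝ × Eu d => r p.1) (Ioo t1 t2 ×ˢ univ) := by
      simp only [hr]; fun_prop
    refine ContinuousOn.mul ?_ ?_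
    · exact hrc.rpow_const fun p hp => Or.inl (hrpos _ hp.1).ne'
    · refine Real.continuous_exp.comp_continuousOn (ContinuousOn.neg (ContinuousOn.mul ?_ ?_))
      · exact hrc.inv₀ fun p hp => (hrpos _ hp.1).ne'
      · fun_prop
  have hgd : ∀ s ∈ Ioo t1 t2, ∀ y, HasDerivAt (fun s => gk (r s) (x - y))
      (-(4 * σ) * ((-(d / (2 * r s)) + ‖x - y‖ ^ 2 / r s ^ 2) * gk (r s) (x - y))) s := by
    intro s hs y
    have h3 : HasDerivAt r (-(4 * σ)) s := by
      simp only [hr]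
      refine (((hasDerivAt_id s).const_sub t2).const_mul (4 * σ) |>.add_const τ).congr_deriv ?_
      ring
    refine ((gk_time (hrpos s hs) (x - y)).comp s h3).congr_deriv ?_
    ring
  have key := deriv_under (f := fun s y => φ y * gk (r s) (x - y) * w s y)
    (f' := fun s y => φ y * (-(4 * σ) * ((-(d / (2 * r s)) + ‖x - y‖ ^ 2 / r s ^ 2)
        * gk (r s) (x - y))) * w s y + φ y * gk (r s) (x - y) * fderiv ℝ U (s, y) (1, 0))
    hs hφc.isCompact (k := tsupport φ) ?_ ?_ ?_ ?_ ?_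
  rotate_left
  · exact ((hφ.continuous.comp continuous_snd).continuousOn.mul hgc).mul hU.continuousOn
  · have hrc : ContinuousOn (fun p : ℝ × Eu d => r p.1) (Ioo t1 t2 ×ˢ univ) := by
      simp only [hr]; fun_prop
    have hφ2 : ContinuousOn (fun p : ℝ × Eu d => φ p.2) (Ioo t1 t2 ×ˢ univ) :=
      (hφ.continuous.comp continuous_snd).continuousOn
    have hq : ContinuousOn (fun p : ℝ × Eu d => -((d : ℝ) / (2 * r p.1)) + ‖x - p.2‖ ^ 2 / r p.1 ^ 2)
        (Ioo t1 t2 ×ˢ univ) := by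
      refine ContinuousOn.add (ContinuousOn.neg ?_) ?_
      · exact continuousOn_const.div (continuousOn_const.mul hrc) fun p hp => by
          have := hrpos _ hp.1; positivity
      · exact ContinuousOn.div (by fun_prop) (hrc.pow 2) fun p hp => by
          have := hrpos _ hp.1; positivity
    exact ((hφ2.mul (continuousOn_const.mul (hq.mul hgc))).mul hU.continuousOn).add
      ((hφ2.mul hgc).mul hUf)
  · intro s hs y
    refine (((hgd s hs y).const_mul (φ y)).mul (hUd s hs y)).congr_deriv ?_
    ring
  · intro s hs y hy
    simp [image_eq_zero_of_notMem_tsupport hy]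
  · intro s hs y hy
    simp [image_eq_zero_of_notMem_tsupport hy]
  refine key.congr_deriv ?_
  have hrs := hrpos s hs
  simp only [hUeq]
  change _ = ∫ y, (σ * (2 * ∑ i, fderiv ℝ φ y (eb i) *
          (2 / (r s) * (x i - y i) * gk (r s) (x - y))
          + gk (r s) (x - y) * lapl φ y)
        + κ * ∑ i, (φ y * (2 / (r s) * (x i - y i) *
            gk (r s) (x - y))
          + gk (r s) (x - y) * fderiv ℝ φ y (eb i)) * b s y i) * w s y
  set ρ := r s
  set ψ : Eu d → ℝ := fun y => φ y * gk ρ (x - y) with hψ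
  have hψs : ContDiff ℝ (⊤ : ℕ∞) ψ := hφ.mul (gk_smooth ρ x)
  have hψc : HasCompactSupport ψ := hφc.mul_right
  have one_le : (1 : WithTop ℕ∞) ≤ ((⊤ : ℕ∞) : WithTop ℕ∞) := by exact_mod_cast le_top
  have hws := H.wsm s hsT
  have hFs : ContDiff ℝ 1 (fun z => w s z • b s z) := (hws.of_le one_le).smul (H.bsm s hsT)
  have hψd : ∀ y (i : Fin d), fderiv ℝ ψ y (eb i) = φ y * (2 / ρ * (x i - y i) * gk ρ (x - y))
      + gk ρ (x - y) * fderiv ℝ φ y (eb i) := by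
    intro y i
    rw [hψ, fderiv_fun_mul (hφ.differentiable (by simp) y)
      ((gk_smooth ρ x).differentiable (by simp) y)]
    rw [add_apply, smul_apply, smul_apply, gk_pd]
    simp
  have hψl : ∀ y, lapl ψ y = φ y * ((-(2 * d / ρ) + 4 / ρ ^ 2 * ‖x - y‖ ^ 2) * gk ρ (x - y)) +
      2 * ∑ i, fderiv ℝ φ y (eb i) * (2 / ρ * (x i - y i) * gk ρ (x - y)) +
      gk ρ (x - y) * lapl φ y := by
    intro y
    rw [hψ, lapl_mul hφ (gk_smooth ρ x), gk_lapl]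
    simp_rw [gk_pd]
  have lc : ∀ f : Eu d → ℝ, ContDiff ℝ (⊤ : ℕ∞) f → Continuous (lapl f) := fun f hf => by
    unfold lapl
    exact continuous_finsetSum _ fun i _ => (pd_smooth (pd_smooth hf _) _).continuous
  have dc : Continuous (diverg (fun z => w s z • b s z)) := by
    unfold diverg
    refine continuous_finsetSum _ fun i _ => ?_
    have : ContDiff ℝ 1 (fun y => (w s y • b s y) i) :=
      (EuclideanSpace.proj i : Eu d →L[ℝ] ℝ).contDiff.comp hFs
    exact (this.continuous_fderiv (by simp)).clm_apply continuous_const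
  have lψc : HasCompactSupport (lapl ψ) := by
    refine HasCompactSupport.intro hψc.isCompact fun y hy => ?_
    unfold lapl
    refine Finset.sum_eq_zero fun i _ => ?_
    have h5 : y ∉ tsupport (fun z => fderiv ℝ (fun z => fderiv ℝ ψ z (eb i)) z (eb i)) := fun h =>
      hy (tsupport_fderiv_apply_subset ℝ (eb i) (tsupport_fderiv_apply_subset ℝ (eb i) h))
    exact image_eq_zero_of_notMem_tsupport
      (f := fun z => fderiv ℝ (fun z => fderiv ℝ ψ z (eb i)) z (eb i)) h5
  have I1 : Integrable (fun y => φ y * (-(4 * σ) * ((-(d / (2 * ρ)) + ‖x - y‖ ^ 2 / ρ ^ 2)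
        * gk ρ (x - y))) * w s y) := by
    have gc' : Continuous fun y : Eu d => gk ρ (x - y) := (gk_smooth ρ x).continuous
    refine Continuous.integrable_of_hasCompactSupport ?_ ?_
    · have := hφ.continuous
      have := hws.continuous
      fun_prop
    · exact (hφc.mul_right).mul_right
  have I2 : Integrable (fun y => ψ y * lapl (w s) y) :=
    (hψs.continuous.mul (lc _ hws)).integrable_of_hasCompactSupport hψc.mul_right
  have I3 : Integrable (fun y => ψ y * diverg (fun z => w s z • b s z) y) :=
    (hψs.continuous.mul dc).integrable_of_hasCompactSupport hψc.mul_right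
  have I2' : Integrable (fun y => lapl ψ y * w s y) :=
    ((lc _ hψs).mul hws.continuous).integrable_of_hasCompactSupport lψc.mul_right
  have I3' : Integrable (fun y => ∑ i, fderiv ℝ ψ y (eb i) * (w s y • b s y) i) := by
    refine integrable_finsetSum _ fun i _ => ?_
    refine Continuous.integrable_of_hasCompactSupport ((pd_smooth hψs _).continuous.mul ?_)
      (hψc.fderiv_apply (𝕜 := ℝ) (eb i)).mul_right
    exact (EuclideanSpace.proj i : Eu d →L[ℝ] ℝ).continuous.comp hFs.continuous
  have step : ∫ y, (φ y * (-(4 * σ) * ((-(d / (2 * ρ)) + ‖x - y‖ ^ 2 / ρ ^ 2)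
        * gk ρ (x - y))) * w s y + φ y * gk ρ (x - y) *
        (σ * lapl (w s) y - κ * diverg (fun z => w s z • b s z) y)) =
      (∫ y, φ y * (-(4 * σ) * ((-(d / (2 * ρ)) + ‖x - y‖ ^ 2 / ρ ^ 2) * gk ρ (x - y))) * w s y)
      + σ * (∫ y, ψ y * lapl (w s) y) - κ * ∫ y, ψ y * diverg (fun z => w s z • b s z) y := by
    rw [sub_eq_add_neg, ← neg_mul κ, int3 I1 I2 I3]
    congr 1; ext y; simp only [hψ]; ring
  rw [step, ibp_lapl hψs hψc hws, ibp_div (hψs.of_le one_le) hψc hFs, mul_neg, sub_neg_eq_add,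
    int3 I1 I2' I3']
  congr 1; ext y
  rw [hψl]
  simp_rw [hψd]
  simp only [PiLp.smul_apply, smul_eq_mul]
  have e5 : ∑ i, (φ y * (2 / ρ * (x i - y i) * gk ρ (x - y)) + gk ρ (x - y) * fderiv ℝ φ y (eb i))
      * (w s y * b s y i) = (∑ i, (φ y * (2 / ρ * (x i - y i) * gk ρ (x - y))
      + gk ρ (x - y) * fderiv ℝ φ y (eb i)) * b s y i) * w s y := by
    rw [Finset.sum_mul]
    exact Finset.sum_congr rfl fun i _ => by ring
  rw [e5]
  generalize ∑ i, (φ y * (2 / ρ * (x i - y i) * gk ρ (x - y))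
      + gk ρ (x - y) * fderiv ℝ φ y (eb i)) * b s y i = S1
  generalize ∑ i, fderiv ℝ φ y (eb i) * (2 / ρ * (x i - y i) * gk ρ (x - y)) = S2
  field_simp
  ring

lemma integral_mono_of_le' {d : ℕ} {f g : Eu d → ℝ} (h0 : ∀ y, 0 ≤ g y) (hg : Integrable g)
    (h : ∀ y, f y ≤ g y) : ∫ y, f y ≤ ∫ y, g y := by
  by_cases hf : Integrable f
  · exact integral_mono hf hg h
  · rw [integral_undef hf]; exact integral_nonneg h0

lemma ptw {d : ℕ} {σ κ r τ q K β : ℝ} (hσ : 0 < σ) (hκ : |κ| ≤ 1) (hτ : 0 < τ) (hr : τ ≤ r)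
    (hq : 0 ≤ q) (x y : Eu d) {p : ℝ} (hp0 : 0 ≤ p) (hp1 : p ≤ 1) {D : Fin d → ℝ}
    (hD : ∀ i, |D i| ≤ q) {l : ℝ} (hl : |l| ≤ q) {b : Eu d} (hbK : ‖b‖ ≤ K) (hbβ : ‖b‖ ≤ β) :
    σ * (2 * ∑ i, D i * (2 / r * (x i - y i) * gk r (x - y)) + gk r (x - y) * l)
      + κ * ∑ i, (p * (2 / r * (x i - y i) * gk r (x - y)) + gk r (x - y) * D i) * b i ≤
    q * (σ * (2 * (d * (2 * 2 ^ ((d : ℝ) / 2) * τ ^ (-(1 : ℝ) / 2) * τ ^ (-(d : ℝ) / 2)))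
      + τ ^ (-(d : ℝ) / 2)) + d * τ ^ (-(d : ℝ) / 2) * K)
     + 2 * 2 ^ ((d : ℝ) / 2) * r ^ (-(1 : ℝ) / 2) * β * gk (2 * r) (x - y) := by
  have hr0 : 0 < r := hτ.trans_le hr
  have hg := gk_pos hr0 (x - y)
  have hgr := gk_grad hr0 (x - y)
  have hdn : -(d : ℝ) / 2 ≤ 0 := by
    have : (0 : ℝ) ≤ d := by positivity
    linarith
  have hg0 : gk r (x - y) ≤ τ ^ (-(d : ℝ) / 2) :=
    (gk_le hr0 _).trans (Real.rpow_le_rpow_of_nonpos hτ hr hdn)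
  have hg2 : gk (2 * r) (x - y) ≤ τ ^ (-(d : ℝ) / 2) :=
    (gk_le (by positivity) _).trans (Real.rpow_le_rpow_of_nonpos hτ (by linarith) hdn)
  have hr12 : r ^ (-(1 : ℝ) / 2) ≤ τ ^ (-(1 : ℝ) / 2) :=
    Real.rpow_le_rpow_of_nonpos hτ hr (by norm_num)
  set c : ℝ := 2 * 2 ^ ((d : ℝ) / 2)
  have hc : 0 < c := by positivity
  set g := gk r (x - y)
  set g2 := gk (2 * r) (x - y)
  have hg2p : 0 < g2 := gk_pos (by positivity) _
  set g0 := τ ^ (-(d : ℝ) / 2)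
  have hg0p : 0 < g0 := by positivity
  have hK : 0 ≤ K := (norm_nonneg b).trans hbK
  have hxi : ∀ i, |x i - y i| ≤ ‖x - y‖ := fun i => by
    simpa using PiLp.norm_apply_le (x - y) i
  have hbi : ∀ i, |b i| ≤ K := fun i => by
    simpa using (PiLp.norm_apply_le b i).trans hbK
  have hL : 2 / r * ‖x - y‖ * g ≤ c * τ ^ (-(1 : ℝ) / 2) * g0 :=
    hgr.trans (by gcongr)
  set L := c * τ ^ (-(1 : ℝ) / 2) * g0
  have T1 : ∑ i, D i * (2 / r * (x i - y i) * g) ≤ d * (q * L) := by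
    calc _ ≤ ∑ i : Fin d, q * L := by
          refine Finset.sum_le_sum fun i _ => ?_
          calc _ ≤ |D i * (2 / r * (x i - y i) * g)| := le_abs_self _
            _ = |D i| * (2 / r * |x i - y i| * g) := by
              rw [abs_mul, abs_mul, abs_mul, abs_of_pos hg, abs_of_pos (by positivity : 0 < 2 / r)]
            _ ≤ q * (2 / r * ‖x - y‖ * g) := by gcongr; exacts [hD i, hxi i]
            _ ≤ _ := by gcongr
      _ = _ := by simp
  have T2 : g * l ≤ g0 * q := by
    calc g * l ≤ g * q := by gcongr; exact (le_abs_self l).trans hl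
      _ ≤ _ := by gcongr
  have T3 : κ * ∑ i, D i * b i ≤ d * (q * K) := by
    calc _ ≤ |κ * ∑ i, D i * b i| := le_abs_self _
      _ = |κ| * |∑ i, D i * b i| := abs_mul _ _
      _ ≤ 1 * ∑ i, |D i * b i| := by gcongr; exact Finset.abs_sum_le_sum_abs _ _
      _ ≤ 1 * ∑ i : Fin d, q * K := by
          gcongr with i; rw [abs_mul]; gcongr; exacts [hD i, hbi i]
      _ = _ := by simp
  have T4 : κ * ∑ i, (x i - y i) * b i ≤ ‖x - y‖ * β := by
    have e : ∑ i, (x i - y i) * b i = inner ℝ (x - y) b := by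
      simp [PiLp.inner_apply, mul_comm]
    rw [e]
    calc _ ≤ |κ * inner ℝ (x - y) b| := le_abs_self _
      _ = |κ| * |inner ℝ (x - y) b| := abs_mul _ _
      _ ≤ 1 * (‖x - y‖ * ‖b‖) := by gcongr; exact abs_real_inner_le_norm _ _
      _ ≤ _ := by rw [one_mul]; gcongr
  have e : κ * ∑ i, (p * (2 / r * (x i - y i) * g) + g * D i) * b i =
      p * (2 / r * g * (κ * ∑ i, (x i - y i) * b i)) + g * (κ * ∑ i, D i * b i) := by
    simp only [Finset.mul_sum, ← Finset.sum_add_distrib]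
    exact Finset.sum_congr rfl fun i _ => by ring
  rw [e]
  have hβ : 0 ≤ β := (norm_nonneg b).trans hbβ
  have T5 : p * (2 / r * g * (κ * ∑ i, (x i - y i) * b i)) ≤ c * r ^ (-(1 : ℝ) / 2) * β * g2 := by
    calc _ ≤ p * (2 / r * g * (‖x - y‖ * β)) := by gcongr
      _ ≤ 1 * (2 / r * g * (‖x - y‖ * β)) := by gcongr
      _ = 2 / r * ‖x - y‖ * g * β := by ring
      _ ≤ c * r ^ (-(1 : ℝ) / 2) * g2 * β := by gcongr
      _ = _ := by ring
  have T6 : g * (κ * ∑ i, D i * b i) ≤ g0 * (d * (q * K)) := by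
    calc _ ≤ g * (d * (q * K)) := by gcongr
      _ ≤ _ := by gcongr
  have T7 : σ * (2 * ∑ i, D i * (2 / r * (x i - y i) * g) + g * l) ≤
      σ * (2 * (d * (q * L)) + g0 * q) := by gcongr
  calc _ ≤ σ * (2 * (d * (q * L)) + g0 * q) + (c * r ^ (-(1 : ℝ) / 2) * β * g2 +
      g0 * (d * (q * K))) := by linarith
    _ = _ := by ring

lemma duhamel_R {d : ℕ} {σ κ T K : ℝ} {b : ℝ → Eu d → Eu d} {w : ℝ → Eu d → ℝ}
    (H : LinSol σ κ T K b w) {t1 t2 τ m q : ℝ} {β B B' : ℝ → ℝ} (hσ : 0 < σ) (hκ : |κ| ≤ 1)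
    (h1 : 0 ≤ t1) (h12 : t1 < t2) (h2 : t2 ≤ T) (hτ : 0 < τ) (x : Eu d)
    (hβ : ∀ s ∈ Ioo t1 t2, ∀ y, ‖b s y‖ ≤ β s)
    (hm : ∀ s ∈ Ioo t1 t2, gc (2 * (4 * σ * (t2 - s) + τ)) (w s) x ≤ m)
    (hBc : ContinuousOn B (Icc t1 t2)) (hB : ∀ s ∈ Ioo t1 t2, HasDerivAt B (B' s) s)
    (hB' : ∀ s ∈ Ioo t1 t2,
      2 * 2 ^ ((d : ℝ) / 2) * (4 * σ * (t2 - s) + τ) ^ (-(1 : ℝ) / 2) * β s * m ≤ B' s)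
    (hq : 0 ≤ q) {φ : Eu d → ℝ} (hφ : ContDiff ℝ (⊤ : ℕ∞) φ)
    (hφc : HasCompactSupport φ) (hφ0 : ∀ y, 0 ≤ φ y) (hφ1 : ∀ y, φ y ≤ 1)
    (hφD : ∀ y i, |fderiv ℝ φ y (eb i)| ≤ q) (hφL : ∀ y, |lapl φ y| ≤ q) :
    (∫ y, φ y * gk τ (x - y) * w t2 y) ≤ gc (4 * σ * (t2 - t1) + τ) (w t1) x + (B t2 - B t1)
      + q * (σ * (2 * (d * (2 * 2 ^ ((d : ℝ) / 2) * τ ^ (-(1 : ℝ) / 2) * τ ^ (-(d : ℝ) / 2)))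
      + τ ^ (-(d : ℝ) / 2)) + d * τ ^ (-(d : ℝ) / 2) * K) * (t2 - t1) := by
  set Q := q * (σ * (2 * (d * (2 * 2 ^ ((d : ℝ) / 2) * τ ^ (-(1 : ℝ) / 2) * τ ^ (-(d : ℝ) / 2)))
      + τ ^ (-(d : ℝ) / 2)) + d * τ ^ (-(d : ℝ) / 2) * K) with hQ
  set r : ℝ → ℝ := fun s => 4 * σ * (t2 - s) + τ with hr
  have hrτ : ∀ s ≤ t2, τ ≤ r s := fun s hs => by
    have : 0 ≤ σ * (t2 - s) := mul_nonneg hσ.le (by linarith)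
    simp only [hr]; nlinarith
  set F : ℝ → ℝ := fun s => ∫ y, φ y * gk (r s) (x - y) * w s y with hF
  have hsub : Icc t1 t2 ⊆ Icc 0 T := Icc_subset_Icc h1 h2
  have hFc : ContinuousOn F (Icc t1 t2) := by
    refine continuousOn_integral_of_compact_support (k := tsupport φ) hφc.isCompact ?_ ?_
    · have hrc : ContinuousOn (fun p : ℝ × Eu d => r p.1) (Icc t1 t2 ×ˢ univ) := by
        simp only [hr]; fun_prop
      have hrp : ∀ p ∈ Icc t1 t2 ×ˢ (univ : Set (Eu d)), r p.1 ≠ 0 := fun p hp =>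
        (hτ.trans_le (hrτ _ hp.1.2)).ne'
      have hgc : ContinuousOn (fun p : ℝ × Eu d => gk (r p.1) (x - p.2)) (Icc t1 t2 ×ˢ univ) := by
        unfold gk
        refine ContinuousOn.mul ?_ ?_
        · exact hrc.rpow_const fun p hp => Or.inl (hrp p hp)
        · refine Real.continuous_exp.comp_continuousOn (ContinuousOn.neg (ContinuousOn.mul ?_ ?_))
          · exact hrc.inv₀ fun p hp => hrp p hp
          · fun_prop
      exact ((hφ.continuous.comp continuous_snd).continuousOn.mul hgc).mul
        (H.smooth.continuousOn.mono (prod_mono hsub subset_rfl))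
    · intro s y hs hy
      simp [image_eq_zero_of_notMem_tsupport hy]
  have anti : AntitoneOn (fun s => F s - B s - Q * s) (Icc t1 t2) := by
    refine antitoneOn_of_hasDerivWithinAt_nonpos (convex_Icc _ _) 
      ((hFc.sub hBc).sub (by fun_prop)) (f' := fun s => deriv F s - B' s - Q) ?_ ?_
    · intro s hs
      rw [interior_Icc] at hs
      have hd := energy_deriv H hσ h1 h2 hτ x hφ hφc hs
      refine HasDerivAt.hasDerivWithinAt ?_
      refine ((hd.differentiableAt.hasDerivAt.sub (hB s hs)).sub
        ((hasDerivAt_id s).const_mul Q)).congr_deriv ?_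
      simp [hF, hr]
    · intro s hs
      rw [interior_Icc] at hs
      have hsT := hsub (Ioo_subset_Icc_self hs)
      have hd := energy_deriv H hσ h1 h2 hτ x hφ hφc hs
      have hrs := hrτ s hs.2.le
      have hrs0 := hτ.trans_le hrs
      have hb := hB' s hs
      have hβ0 : 0 ≤ β s := (norm_nonneg _).trans (hβ s hs 0)
      have key : deriv F s ≤ Q + B' s := by
        refine hd.deriv.le.trans ?_
        have hwi := H.wint s hsT
        have hgi := gc_int (τ := 2 * r s) (by positivity) hwi x
        set c2 := 2 * 2 ^ ((d : ℝ) / 2) * (r s) ^ (-(1 : ℝ) / 2) * β s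
        have hc2 : 0 ≤ c2 := by positivity
        have hI : Integrable (fun y => Q * w s y + c2 * (gk (2 * r s) (x - y) * w s y)) :=
          (hwi.const_mul Q).add (hgi.const_mul c2)
        have hIv : ∫ y, (Q * w s y + c2 * (gk (2 * r s) (x - y) * w s y)) =
            Q + c2 * gc (2 * r s) (w s) x := by
          rw [integral_add (hwi.const_mul Q) (hgi.const_mul c2), integral_const_mul,
            integral_const_mul, H.mass s hsT, mul_one]
          rfl
        refine le_trans ?_ (hIv.le.trans (add_le_add le_rfl
          ((mul_le_mul_of_nonneg_left (hm s hs) hc2).trans hb)))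
        refine integral_mono_of_le' ?_ hI ?_
        · intro y
          have h0 := H.nonneg s hsT y
          have := H.bK s hsT y
          have hK : 0 ≤ K := (norm_nonneg _).trans this
          have := gk_pos (τ := 2 * r s) (by positivity) (x - y)
          have : 0 ≤ Q := by positivity
          positivity
        · intro y
          have h0 := H.nonneg s hsT y
          have := ptw hσ hκ hτ hrs hq x y (hφ0 y) (hφ1 y) (hφD y) (hφL y) (H.bK s hsT y) (hβ s hs y)
          refine (mul_le_mul_of_nonneg_right this h0).trans (le_of_eq ?_)
          simp only [hQ, c2]; ring
      linarith
  have fin := anti (left_mem_Icc.2 h12.le) (right_mem_Icc.2 h12.le) h12.le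
  simp only at fin
  have hF2 : F t2 = ∫ y, φ y * gk τ (x - y) * w t2 y := by simp [hF, hr]
  have hF1 : F t1 ≤ gc (r t1) (w t1) x := by
    have hw := H.wint t1 (hsub (left_mem_Icc.2 h12.le))
    have hr1 := hτ.trans_le (hrτ t1 h12.le)
    refine integral_mono_of_le' (fun y => ?_) (gc_int hr1 hw x) fun y => ?_
    · exact mul_nonneg (gk_pos hr1 _).le (H.nonneg t1 (hsub (left_mem_Icc.2 h12.le)) y)
    · have : 0 ≤ gk (r t1) (x - y) * w t1 y :=
        mul_nonneg (gk_pos hr1 _).le (H.nonneg t1 (hsub (left_mem_Icc.2 h12.le)) y)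
      calc _ = φ y * (gk (r t1) (x - y) * w t1 y) := by ring
        _ ≤ 1 * (gk (r t1) (x - y) * w t1 y) := by gcongr; exact hφ1 y
        _ = _ := one_mul _
  rw [← hF2]
  linarith

lemma duhamel {d : ℕ} {σ κ T K : ℝ} {b : ℝ → Eu d → Eu d} {w : ℝ → Eu d → ℝ}
    (H : LinSol σ κ T K b w) {t1 t2 τ m : ℝ} {β B B' : ℝ → ℝ} (hσ : 0 < σ) (hκ : |κ| ≤ 1)
    (h1 : 0 ≤ t1) (h12 : t1 < t2) (h2 : t2 ≤ T) (hτ : 0 < τ) (x : Eu d)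
    (hβ : ∀ s ∈ Ioo t1 t2, ∀ y, ‖b s y‖ ≤ β s)
    (hm : ∀ s ∈ Ioo t1 t2, gc (2 * (4 * σ * (t2 - s) + τ)) (w s) x ≤ m)
    (hBc : ContinuousOn B (Icc t1 t2)) (hB : ∀ s ∈ Ioo t1 t2, HasDerivAt B (B' s) s)
    (hB' : ∀ s ∈ Ioo t1 t2,
      2 * 2 ^ ((d : ℝ) / 2) * (4 * σ * (t2 - s) + τ) ^ (-(1 : ℝ) / 2) * β s * m ≤ B' s) :
    gc τ (w t2) x ≤ gc (4 * σ * (t2 - t1) + τ) (w t1) x + (B t2 - B t1) := by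
  obtain ⟨C, hC, hcut⟩ := cutoff d
  have hR : ∀ n : ℕ, (1 : ℝ) ≤ (n : ℝ) + 1 := fun n => by
    have : (0 : ℝ) ≤ n := by positivity
    linarith
  choose φ p1 p2 p3 p4 p5 p6 p7 using fun n : ℕ => hcut ((n : ℝ) + 1) (hR n)
  have key := fun n : ℕ => duhamel_R H hσ hκ h1 h12 h2 hτ x hβ hm hBc hB hB'
    (q := C / ((n : ℝ) + 1)) (by positivity) (p1 n) (p2 n) (p3 n) (p4 n) (p6 n) (p7 n)
  have ht2 : t2 ∈ Icc 0 T := ⟨by linarith, h2⟩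
  have hgi := gc_int hτ (H.wint t2 ht2) x
  have lim1 : Filter.Tendsto (fun n => ∫ y, φ n y * gk τ (x - y) * w t2 y) Filter.atTop
      (nhds (gc τ (w t2) x)) := by
    refine tendsto_integral_of_dominated_convergence (fun y => gk τ (x - y) * w t2 y) ?_ hgi ?_ ?_
    · intro n
      have hh := (p1 n).continuous.aestronglyMeasurable.mul hgi.aestronglyMeasurable
      refine hh.congr (Filter.Eventually.of_forall fun y => by simp [mul_assoc])
    · intro n
      refine Filter.Eventually.of_forall fun y => ?_
      have : 0 ≤ gk τ (x - y) * w t2 y := mul_nonneg (gk_pos hτ _).le (H.nonneg t2 ht2 y)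
      rw [mul_assoc, Real.norm_eq_abs, abs_mul, abs_of_nonneg (p3 n y), abs_of_nonneg this]
      calc _ ≤ 1 * (gk τ (x - y) * w t2 y) := by gcongr; exact p4 n y
        _ = _ := one_mul _
    · refine Filter.Eventually.of_forall fun y => ?_
      refine tendsto_const_nhds.congr' ?_
      obtain ⟨N, hN⟩ := exists_nat_ge ‖y‖
      filter_upwards [Filter.eventually_ge_atTop N] with n hn
      have : (N : ℝ) ≤ n := by exact_mod_cast hn
      rw [p5 n y (by linarith), one_mul]
  have lim0 : Filter.Tendsto (fun n : ℕ => C / ((n : ℝ) + 1)) Filter.atTop (nhds 0) :=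
    (tendsto_one_div_add_atTop_nhds_zero_nat (𝕜 := ℝ)).const_mul C |>.congr (fun n => by ring) |>.trans (by simp)
  refine le_of_tendsto_of_tendsto' lim1 ?_ key
  have := (lim0.mul_const (σ * (2 * (d * (2 * 2 ^ ((d : ℝ) / 2) * τ ^ (-(1 : ℝ) / 2) *
    τ ^ (-(d : ℝ) / 2))) + τ ^ (-(d : ℝ) / 2)) + d * τ ^ (-(d : ℝ) / 2) * K)).mul_const (t2 - t1)
  have h9 := this.const_add (gc (4 * σ * (t2 - t1) + τ) (w t1) x + (B t2 - B t1))
  simpa using h9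

/-- Duhamel with a constant bound. -/
lemma duhamel_const {d : ℕ} {σ κ T K : ℝ} {b : ℝ → Eu d → Eu d} {w : ℝ → Eu d → ℝ}
    (H : LinSol σ κ T K b w) {t1 t2 τ m : ℝ} (hσ : 0 < σ) (hκ : |κ| ≤ 1)
    (h1 : 0 ≤ t1) (h12 : t1 < t2) (h2 : t2 ≤ T) (hτ : 0 < τ) (hm0 : 0 ≤ m) (x : Eu d)
    (hm : ∀ s ∈ Ioo t1 t2, gc (2 * (4 * σ * (t2 - s) + τ)) (w s) x ≤ m) :
    gc τ (w t2) x ≤ gc (4 * σ * (t2 - t1) + τ) (w t1) x +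
      2 * 2 ^ ((d : ℝ) / 2) * τ ^ (-(1 : ℝ) / 2) * K * m * (t2 - t1) := by
  have hK : 0 ≤ K := (norm_nonneg _).trans (H.bK t1 ⟨h1, by linarith⟩ 0)
  have := duhamel H hσ hκ h1 h12 h2 hτ x (β := fun _ => K) (m := m)
    (B := fun s => 2 * 2 ^ ((d : ℝ) / 2) * τ ^ (-(1 : ℝ) / 2) * K * m * s)
    (B' := fun s => 2 * 2 ^ ((d : ℝ) / 2) * τ ^ (-(1 : ℝ) / 2) * K * m)
    (fun s hs y => H.bK s ⟨by linarith [hs.1], by linarith [hs.2]⟩ y) hm (by fun_prop)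
    (fun s _ => by simpa using (hasDerivAt_id s).const_mul _) ?_
  · calc _ ≤ _ := this
      _ = _ := by ring
  · intro s hs
    have : 0 ≤ σ * (t2 - s) := mul_nonneg hσ.le (by linarith [hs.2])
    have : (4 * σ * (t2 - s) + τ) ^ (-(1 : ℝ) / 2) ≤ τ ^ (-(1 : ℝ) / 2) :=
      Real.rpow_le_rpow_of_nonpos hτ (by nlinarith) (by norm_num)
    gcongr

/-- Elementary beta-type bound. -/
lemma beta_pt {s t : ℝ} (hs : 0 < s) (hst : s < t) :
    1 / √(t - s) * (1 / √s) ≤ √(2 / t) * (1 / √s + 1 / √(t - s)) := by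
  have ht : 0 < t := hs.trans hst
  have hts : 0 < t - s := by linarith
  have k1 : 0 ≤ 1 / √s := by positivity
  have k2 : 0 ≤ 1 / √(t - s) := by positivity
  have gen : ∀ u, t / 2 ≤ u → 1 / √u ≤ √(2 / t) := by
    intro u hu
    have hu0 : 0 < u := by linarith
    rw [one_div, ← Real.sqrt_inv]
    apply Real.sqrt_le_sqrt
    rw [show 2 / t = (t / 2)⁻¹ by rw [inv_div]]
    exact inv_anti₀ (by positivity) hu
  have k3 : 0 ≤ √(2 / t) := by positivity
  rcases le_total (t / 2) s with h | h
  · have := mul_le_mul_of_nonneg_left (gen s h) k2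
    nlinarith [mul_nonneg k3 k1]
  · have := mul_le_mul_of_nonneg_right (gen (t - s) (by linarith)) k1
    nlinarith [mul_nonneg k3 k2]

/-- Duhamel with an inverse-square-root bound. -/
lemma duhamel_sqrt {d : ℕ} {σ κ T K : ℝ} {b : ℝ → Eu d → Eu d} {w : ℝ → Eu d → ℝ}
    (H : LinSol σ κ T K b w) {t τ m ε : ℝ} (hσ : 0 < σ) (hκ : |κ| ≤ 1)
    (h0 : 0 < t) (h2 : t ≤ T) (hτ : 0 < τ) (hm0 : 0 ≤ m) (hε : 0 ≤ ε) (x : Eu d)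
    (hβ : ∀ s ∈ Ioo 0 t, ∀ y, ‖b s y‖ ≤ ε / √s)
    (hm : ∀ s ∈ Ioo 0 t, gc (2 * (4 * σ * (t - s) + τ)) (w s) x ≤ m) :
    gc τ (w t) x ≤ gc (4 * σ * t + τ) (w 0) x +
      2 * 2 ^ ((d : ℝ) / 2) * (1 / √(4 * σ)) * (4 * √2) * ε * m := by
  set c := 2 * 2 ^ ((d : ℝ) / 2) * (1 / √(4 * σ)) * ε * m with hc
  have hc0 : 0 ≤ c := by positivity
  have := duhamel H hσ hκ le_rfl h0 h2 hτ x (β := fun s => ε / √s) (m := m)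
    (B := fun s => c * √(2 / t) * (2 * √s - 2 * √(t - s)))
    (B' := fun s => c * √(2 / t) * (1 / √s + 1 / √(t - s)))
    hβ hm (by fun_prop) ?_ ?_
  · rw [sub_zero] at this
    refine this.trans (le_of_eq ?_)
    have e : √(2 / t) * √t = √2 := by
      rw [← Real.sqrt_mul (by positivity)]; congr 1; field_simp
    simp only [sub_self, Real.sqrt_zero]
    have : c * √(2 / t) * (2 * √t - 2 * 0) - c * √(2 / t) * (2 * 0 - 2 * √t) =
      4 * c * (√(2 / t) * √t) := by ring
    rw [this, e, hc]; ring
  · intro s hs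
    have d1 := (Real.hasDerivAt_sqrt hs.1.ne').const_mul 2
    have d2 := (((hasDerivAt_id s).const_sub t).sqrt (by simp; linarith [hs.2])).const_mul 2
    refine ((d1.sub d2).const_mul (c * √(2 / t))).congr_deriv ?_
    simp only [id]
    ring
  · intro s hs
    have hts : 0 < t - s := by linarith [hs.2]
    have e1 : (4 * σ * (t - s) + τ) ^ (-(1 : ℝ) / 2) ≤ 1 / √(4 * σ) * (1 / √(t - s)) := by
      calc _ ≤ (4 * σ * (t - s)) ^ (-(1 : ℝ) / 2) :=
            Real.rpow_le_rpow_of_nonpos (by positivity) (by linarith) (by norm_num)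
        _ = _ := by
          rw [neg_div, Real.rpow_neg (by positivity), ← Real.sqrt_eq_rpow,
            Real.sqrt_mul (by positivity)]
          field_simp
    calc _ ≤ 2 * 2 ^ ((d : ℝ) / 2) * (1 / √(4 * σ) * (1 / √(t - s))) * (ε / √s) * m := by
          gcongr
      _ = c * (1 / √(t - s) * (1 / √s)) := by rw [hc]; ring
      _ ≤ c * (√(2 / t) * (1 / √s + 1 / √(t - s))) := by
          exact mul_le_mul_of_nonneg_left (beta_pt hs.1 hs.2) hc0
      _ = _ := by ring

lemma gc_nonneg {d : ℕ} {τ : ℝ} (hτ : 0 < τ) {f : Eu d → ℝ} (hf0 : ∀ x, 0 ≤ f x) (x : Eu d) :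
    0 ≤ gc τ f x :=
  integral_nonneg fun y => mul_nonneg (gk_pos hτ _).le (hf0 y)

/-- Control of the drift by the Gaussian averages. -/
def DriftCtl {d : ℕ} (σ T a c2 : ℝ) (b : ℝ → Eu d → Eu d) (w : ℝ → Eu d → ℝ) : Prop :=
  ∀ e : ℝ, 0 < e → ∃ δ : ℝ, 0 < δ ∧ ∀ s ∈ Ioc (0:ℝ) T, ∀ Z : ℝ, 0 ≤ Z →
    (∀ τ, δ ≤ τ → ∀ x, (4 * σ * s + τ) ^ a * gc τ (w s) x ≤ Z) →
    ∀ x, ‖b s x‖ ≤ c2 * Z / √(4 * σ * s) + e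

lemma bootstrap {d : ℕ} {σ κ T K a c2 e0 ε : ℝ} {b : ℝ → Eu d → Eu d} {w : ℝ → Eu d → ℝ}
    (H : LinSol σ κ T K b w) (hσ : 0 < σ) (hκ : |κ| ≤ 1) (hT : 0 < T) (ha0 : 0 ≤ a)
    (had : a ≤ ((d : ℝ) + 1) / 2) (hc2 : 0 < c2) (he0 : 0 < e0)
    (hε : ε = 2 * c2 * e0 / √σ)
    (hsm : 2 * 2 ^ ((d : ℝ) / 2) * (1 / √(4 * σ)) * (4 * √2) * ε * 3 ≤ 1)
    (hctl : DriftCtl σ T a c2 b w)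
    (hinit : ∀ τ, 0 < τ → ∀ x, τ ^ a * gc τ (w 0) x ≤ e0) :
    ∀ s ∈ Ioc 0 T, ∀ x, ‖b s x‖ ≤ ε / √s := by
  have hεp : 0 ≤ ε := by rw [hε]; positivity
  have hK : 0 ≤ K := (norm_nonneg _).trans (H.bK 0 ⟨le_rfl, hT.le⟩ 0)
  obtain ⟨δ, hδ, hdr⟩ := hctl (c2 * e0 / √(4 * σ * T)) (by positivity)
  -- drift bound from level 3
  have drift : ∀ s ∈ Ioc 0 T, (∀ τ, δ ≤ τ → ∀ x, (4 * σ * s + τ) ^ a * gc τ (w s) x ≤ 3 * e0) →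
      ∀ x, ‖b s x‖ ≤ ε / √s := by
    intro s hs h x
    have h1 := hdr s hs (3 * e0) (by positivity) h x
    have hs0 : 0 < s := hs.1
    have h2 : c2 * e0 / √(4 * σ * T) ≤ c2 * e0 / √(4 * σ * s) := by
      gcongr; exact hs.2
    have h3 : √(4 * σ * s) = 2 * √σ * √s := by
      rw [Real.sqrt_mul (by positivity), Real.sqrt_mul (by positivity),
        show (4 : ℝ) = 2 ^ 2 by norm_num, Real.sqrt_sq (by norm_num)]
    have h4 : ε / √s = 4 * (c2 * e0 / √(4 * σ * s)) := by
      rw [hε, h3]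
      have : 0 < √σ := by positivity
      have : 0 < √s := by positivity
      field_simp
      norm_num
    rw [h4]
    calc _ ≤ _ := h1
      _ ≤ c2 * (3 * e0) / √(4 * σ * s) + c2 * e0 / √(4 * σ * s) := by gcongr
      _ = _ := by ring
  set P : ℝ → ℝ → Prop := fun c t => ∀ s ∈ Icc 0 t, ∀ τ, δ ≤ τ → ∀ x,
    (4 * σ * s + τ) ^ a * gc τ (w s) x ≤ c * e0 with hP
  have improve : ∀ t ≤ T, P 3 t → P 2 t := by
    intro t ht h s hs τ hτ x
    have hτ0 : 0 < τ := hδ.trans_le hτ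
    rcases hs.1.eq_or_lt with h0 | h0
    · subst h0
      have := hinit τ hτ0 x
      simp only [mul_zero, zero_add]
      linarith
    have hbase : 0 < 4 * σ * s + τ := by positivity
    have D := duhamel_sqrt H hσ hκ h0 (hs.2.trans ht) hτ0
      (m := 3 * e0 * ((4 * σ * s + τ) ^ a)⁻¹) (by positivity) hεp x ?_ ?_
    · calc _ ≤ (4 * σ * s + τ) ^ a * (gc (4 * σ * s + τ) (w 0) x +
          2 * 2 ^ ((d : ℝ) / 2) * (1 / √(4 * σ)) * (4 * √2) * ε *
            (3 * e0 * ((4 * σ * s + τ) ^ a)⁻¹)) := by gcongr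
        _ = (4 * σ * s + τ) ^ a * gc (4 * σ * s + τ) (w 0) x +
          2 * 2 ^ ((d : ℝ) / 2) * (1 / √(4 * σ)) * (4 * √2) * ε * 3 * e0 := by
            have : 0 < (4 * σ * s + τ) ^ a := by positivity
            field_simp
        _ ≤ e0 + 1 * e0 := by
            gcongr
            exact hinit _ hbase x
        _ = _ := by ring
    · intro s' hs' y
      exact drift s' ⟨hs'.1, by linarith [hs'.2, hs.2]⟩
        (h s' ⟨hs'.1.le, by linarith [hs'.2, hs.2]⟩) y
    · intro s' hs'
      have hss : 0 < σ * (s - s') := mul_pos hσ (by linarith [hs'.2])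
      have hs'0 : 0 < s' := hs'.1
      have h5 := h s' ⟨hs'.1.le, by linarith [hs'.2, hs.2]⟩ (2 * (4 * σ * (s - s') + τ))
        (by nlinarith) x
      have h6 : (4 * σ * s + τ) ^ a ≤ (4 * σ * s' + 2 * (4 * σ * (s - s') + τ)) ^ a :=
        Real.rpow_le_rpow hbase.le (by nlinarith) ha0
      have hg := gc_nonneg (τ := 2 * (4 * σ * (s - s') + τ)) (by nlinarith)
        (H.nonneg s' ⟨hs'.1.le, by linarith [hs'.2, hs.2]⟩) x
      rw [← div_eq_mul_inv, le_div_iff₀ (by positivity), mul_comm]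
      exact (mul_le_mul_of_nonneg_right h6 hg).trans h5
  set L : ℝ := (4 * σ * T / δ + 1) ^ a * δ ^ (a - ((d : ℝ) + 1) / 2) with hL
  have hLp : 0 < L := by positivity
  set A : ℝ := 2 * 2 ^ ((d : ℝ) / 2) * K with hA
  have hAp : 0 ≤ A := by positivity
  set h := e0 / (A * L + 1) with hh
  have hhp : 0 < h := by positivity
  have hAh : A * L * h ≤ e0 := by
    rw [hh, mul_div_assoc', div_le_iff₀ (by positivity)]
    nlinarith
  have extend : ∀ t, 0 ≤ t → t ≤ T → P 2 t → ∀ t', t' ≤ T → t' ≤ t + h → P 3 t' := by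
    intro t ht0 ht hPt t' ht' hth s hs τ hτ x
    have hτ0 : 0 < τ := hδ.trans_le hτ
    rcases le_or_gt s t with hst | hst
    · have := hPt s ⟨hs.1, hst⟩ τ hτ x
      linarith
    have D := duhamel_const H hσ hκ ht0 hst (hs.2.trans ht') hτ0 (m := τ ^ (-(d : ℝ) / 2))
      (by positivity) x ?_
    · have hst' : 0 < σ * (s - t) := mul_pos hσ (by linarith)
      have hs0 : 0 ≤ s := hs.1
      have h1 := hPt t ⟨ht0, le_rfl⟩ (4 * σ * (s - t) + τ) (by nlinarith) x
      rw [show 4 * σ * t + (4 * σ * (s - t) + τ) = 4 * σ * s + τ by ring] at h1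
      have h2 : (4 * σ * s + τ) ^ a * (τ ^ (-(1 : ℝ) / 2) * τ ^ (-(d : ℝ) / 2)) ≤ L := by
        have e1 : 4 * σ * s + τ ≤ τ * (4 * σ * T / δ + 1) := by
          have : 4 * σ * s ≤ 4 * σ * T * (τ / δ) := by
            have i1 : 1 ≤ τ / δ := by rw [le_div_iff₀ hδ]; linarith
            have i2 : 4 * σ * s ≤ 4 * σ * T := by gcongr; linarith [hs.2]
            have i3 : 0 ≤ 4 * σ * T := by positivity
            nlinarith
          calc _ ≤ 4 * σ * T * (τ / δ) + τ := by linarith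
            _ = _ := by ring
        have e2 : (4 * σ * s + τ) ^ a ≤ τ ^ a * (4 * σ * T / δ + 1) ^ a := by
          rw [← Real.mul_rpow hτ0.le (by positivity)]
          exact Real.rpow_le_rpow (by positivity) e1 ha0
        calc _ ≤ τ ^ a * (4 * σ * T / δ + 1) ^ a * (τ ^ (-(1 : ℝ) / 2) * τ ^ (-(d : ℝ) / 2)) := by
              gcongr
          _ = (4 * σ * T / δ + 1) ^ a * (τ ^ a * (τ ^ (-(1 : ℝ) / 2) * τ ^ (-(d : ℝ) / 2))) := by
              ring
          _ = (4 * σ * T / δ + 1) ^ a * τ ^ (a - ((d : ℝ) + 1) / 2) := by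
              rw [← Real.rpow_add hτ0, ← Real.rpow_add hτ0]
              congr 2; ring
          _ ≤ _ := by
              rw [hL]
              gcongr ?_ * ?_
              exact Real.rpow_le_rpow_of_nonpos hδ hτ (by linarith)
      calc _ ≤ (4 * σ * s + τ) ^ a * (gc (4 * σ * (s - t) + τ) (w t) x +
            2 * 2 ^ ((d : ℝ) / 2) * τ ^ (-(1 : ℝ) / 2) * K * τ ^ (-(d : ℝ) / 2) * (s - t)) := by
            gcongr
        _ = (4 * σ * s + τ) ^ a * gc (4 * σ * (s - t) + τ) (w t) x +
            A * ((4 * σ * s + τ) ^ a * (τ ^ (-(1 : ℝ) / 2) * τ ^ (-(d : ℝ) / 2))) * (s - t) := by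
            rw [hA]; ring
        _ ≤ 2 * e0 + A * L * h := by
            gcongr
            linarith [hs.2]
        _ ≤ _ := by linarith
    · intro s' hs'
      have hss : 0 < σ * (s - s') := mul_pos hσ (by linarith [hs'.2])
      have hmem : s' ∈ Icc 0 T := ⟨by linarith [hs'.1], by linarith [hs'.2, hs.2]⟩
      have hp : 0 < 2 * (4 * σ * (s - s') + τ) := by nlinarith
      refine (gc_le hp (H.wint s' hmem) (H.nonneg s' hmem) (H.mass s' hmem) x).trans ?_
      refine Real.rpow_le_rpow_of_nonpos hτ0 (by nlinarith) ?_
      have : (0 : ℝ) ≤ d := by positivity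
      linarith
  have ind : ∀ n : ℕ, P 2 (min (n * h) T) := by
    intro n
    induction n with
    | zero =>
      simp only [Nat.cast_zero, zero_mul, min_eq_left hT.le]
      intro s hs τ hτ x
      obtain rfl : s = 0 := le_antisymm hs.2 hs.1
      have := hinit τ (hδ.trans_le hτ) x
      simp only [mul_zero, zero_add]
      linarith
    | succ n ih =>
      refine improve _ (min_le_right _ _) ?_
      refine extend _ ?_ (min_le_right _ _) ih _ (min_le_right _ _) ?_
      · exact le_min (by positivity) hT.le
      · push_cast
        rcases le_total ((n : ℝ) * h) T with h7 | h7
        · rw [min_eq_left h7]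
          exact (min_le_left _ _).trans (by linarith)
        · rw [min_eq_right h7]
          exact (min_le_right _ _).trans (by linarith)
  obtain ⟨n, hn⟩ := exists_nat_ge (T / h)
  have hPT := ind n
  rw [min_eq_right (by rwa [div_le_iff₀ hhp] at hn)] at hPT
  intro s hs x
  refine drift s hs (fun τ hτ y => ?_) x
  have := hPT s ⟨hs.1.le, hs.2⟩ τ hτ y
  linarith

lemma stepB {d : ℕ} {σ κ T K M ε : ℝ} {b : ℝ → Eu d → Eu d} {w : ℝ → Eu d → ℝ}
    (H : LinSol σ κ T K b w) (hσ : 0 < σ) (hκ : |κ| ≤ 1) (hT : 0 < T) (hM : 0 ≤ M)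
    (hε : 0 ≤ ε)
    (hsm : 2 * 2 ^ ((d : ℝ) / 2) * (1 / √(4 * σ)) * (4 * √2) * ε * 3 ≤ 1)
    (hb : ∀ s ∈ Ioc 0 T, ∀ x, ‖b s x‖ ≤ ε / √s)
    (hw0 : ∀ x, w 0 x ≤ M) : ∀ t ∈ Icc 0 T, ∀ x, w t x ≤ 2 * M := by
  intro t ht x
  refine gc_limit (H.wint t ht) (H.wsm t ht).continuous x fun τ0 hτ0 => ?_
  have hpi := Real.pi_pos
  set N := M * Real.pi ^ ((d : ℝ) / 2) with hN
  have hN0 : 0 ≤ N := by positivity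
  set m0 := τ0 ^ (-(d : ℝ) / 2)
  have hm0 : 0 < m0 := by positivity
  have h0T : (0 : ℝ) ∈ Icc 0 T := ⟨le_rfl, hT.le⟩
  have it : ∀ n : ℕ, ∀ s ∈ Icc 0 T, ∀ τ, τ0 ≤ τ → ∀ x, gc τ (w s) x ≤ 2 * N + m0 * (1 / 2) ^ n := by
    intro n
    induction n with
    | zero =>
      intro s hs τ hτ x
      have h1 := gc_le (hτ0.trans_le hτ) (H.wint s hs) (H.nonneg s hs) (H.mass s hs) x
      have : τ ^ (-(d : ℝ) / 2) ≤ m0 := Real.rpow_le_rpow_of_nonpos hτ0 hτ (by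
        have : (0 : ℝ) ≤ d := by positivity
        linarith)
      simp; linarith
    | succ n ih =>
      intro s hs τ hτ x
      have hτp := hτ0.trans_le hτ
      have hpw : 0 < m0 * (1 / 2) ^ n := by positivity
      rcases hs.1.eq_or_lt with h0 | h0
      · subst h0
        have := gc_le_sup hτp (H.wint 0 h0T) hw0 x
        have : 0 ≤ m0 * (1 / 2) ^ (n + 1) := by positivity
        linarith
      have D := duhamel_sqrt H hσ hκ h0 hs.2 hτp (m := 2 * N + m0 * (1 / 2) ^ n) (by positivity) hε x
        (fun s' hs' y => hb s' ⟨hs'.1, by linarith [hs'.2, hs.2]⟩ y) (fun s' hs' => by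
          have hss : 0 < σ * (s - s') := mul_pos hσ (by linarith [hs'.2])
          exact ih s' ⟨hs'.1.le, by linarith [hs'.2, hs.2]⟩ _ (by nlinarith) x)
      have D2 := gc_le_sup (τ := 4 * σ * s + τ) (by positivity) (H.wint 0 h0T) hw0 x
      set c := 2 * 2 ^ ((d : ℝ) / 2) * (1 / √(4 * σ)) * (4 * √2) * ε
      have : c * (2 * N + m0 * (1 / 2) ^ n) ≤ 1 / 3 * (2 * N + m0 * (1 / 2) ^ n) := by
        gcongr; linarith
      rw [pow_succ]
      linarith
  have lim : Filter.Tendsto (fun n : ℕ => 2 * N + m0 * (1 / 2 : ℝ) ^ n) Filter.atTop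
      (nhds (2 * N + m0 * 0)) :=
    ((tendsto_pow_atTop_nhds_zero_of_lt_one (by norm_num) (by norm_num)).const_mul m0).const_add _
  have := ge_of_tendsto' lim fun n => it n t ht τ0 le_rfl x
  rw [hN] at this
  linarith

lemma rz_ball {d : ℕ} {μ : ℝ} (hd : 1 ≤ d) (hμ : μ < d) (r : ℝ) :
    IntegrableOn (fun y : Eu d => ‖y‖ ^ (-μ)) (Metric.ball 0 r) := by
  have : Nonempty (Fin d) := ⟨⟨0, hd⟩⟩
  rw [integrableOn_fun_norm_addHaar (volume : Measure (Eu d)) (f := fun t : ℝ => t ^ (-μ))]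
  rcases le_or_gt r 0 with hr | hr
  · rw [Ioo_eq_empty (by simpa using hr)]; exact integrableOn_empty
  have h1 : IntegrableOn (fun t : ℝ => t ^ ((d : ℝ) - 1 - μ)) (Ioo 0 r) := by
    have := intervalIntegral.intervalIntegrable_rpow' (a := 0) (b := r)
      (r := (d : ℝ) - 1 - μ) (by linarith)
    rw [intervalIntegrable_iff_integrableOn_Ioo_of_le hr.le] at this
    exact this
  refine h1.congr_fun (fun t ht => ?_) measurableSet_Ioo
  have ht0 : 0 < t := ht.1
  simp only [finrank_euclideanSpace_fin, smul_eq_mul]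
  rw [← Real.rpow_natCast, ← Real.rpow_add ht0, Nat.cast_sub hd]
  congr 1; push_cast; ring

lemma rz_locint {d : ℕ} {μ : ℝ} (hd : 1 ≤ d) (hμ : μ < d) :
    LocallyIntegrable (fun y : Eu d => ‖y‖ ^ (-μ)) := by
  intro x
  exact ⟨Metric.ball 0 (‖x‖ + 1), Metric.isOpen_ball.mem_nhds (by simp), rz_ball hd hμ _⟩

lemma rz_meas {d : ℕ} (μ : ℝ) : Measurable (fun y : Eu d => ‖y‖ ^ (-μ)) := by fun_prop

lemma rz_conv_int {d : ℕ} {μ : ℝ} (hd : 1 ≤ d) (hμ : μ < d) {E : Type*}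
    [NormedAddCommGroup E] [NormedSpace ℝ E] {F : Eu d → E} (hF : Continuous F)
    (hFc : HasCompactSupport F) (z : Eu d) : Integrable (fun y => ‖y‖ ^ (-μ) • F (z - y)) := by
  refine LocallyIntegrable.integrable_smul_right_of_hasCompactSupport (rz_locint hd hμ)
    (by fun_prop) ?_
  exact hFc.comp_homeomorph (Homeomorph.subLeft z)

lemma rz_conv_bdd {d : ℕ} {μ : ℝ} (hd : 1 ≤ d) (hμ0 : 0 ≤ μ) (hμ : μ < d) {E : Type*}
    [NormedAddCommGroup E] [NormedSpace ℝ E] {F : Eu d → E} (hF : Continuous F)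
    (hFc : HasCompactSupport F) : ∃ C, ∀ z, ‖∫ y, ‖y‖ ^ (-μ) • F (z - y)‖ ≤ C := by
  obtain ⟨A, hA⟩ := hFc.exists_bound_of_continuous hF
  have hFi : Integrable F := hF.integrable_of_hasCompactSupport hFc
  refine ⟨(∫ y, (Metric.ball (0 : Eu d) 1).indicator (fun y : Eu d => ‖y‖ ^ (-μ) * A) y) +
    ∫ y, ‖F y‖, fun z => ?_⟩
  have i1 : Integrable ((Metric.ball (0 : Eu d) 1).indicator (fun y : Eu d => ‖y‖ ^ (-μ) * A)) := by
    rw [integrable_indicator_iff measurableSet_ball]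
    exact (rz_ball hd hμ 1).mul_const A
  have i2 : Integrable (fun y => ‖F (z - y)‖) := (hFi.comp_sub_left z).norm
  have e2 : ∫ y, ‖F (z - y)‖ = ∫ y, ‖F y‖ :=
    integral_sub_left_eq_self (fun y => ‖F y‖) volume z
  rw [← e2, ← integral_add i1 i2]
  refine norm_integral_le_of_norm_le (i1.add i2) (Filter.Eventually.of_forall fun y => ?_)
  rw [norm_smul, Real.norm_eq_abs, abs_of_nonneg (by positivity)]
  have h0 : 0 ≤ ‖F (z - y)‖ := norm_nonneg _
  by_cases hy : y ∈ Metric.ball (0 : Eu d) 1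
  · rw [indicator_of_mem hy]
    have : ‖y‖ ^ (-μ) * ‖F (z - y)‖ ≤ ‖y‖ ^ (-μ) * A := by gcongr; exact hA _
    linarith
  · rw [indicator_of_notMem hy, zero_add]
    have hy1 : 1 ≤ ‖y‖ := by simpa using hy
    have : ‖y‖ ^ (-μ) ≤ 1 := Real.rpow_le_one_of_one_le_of_nonpos hy1 (by linarith)
    nlinarith

lemma rz_conv_smooth {d : ℕ} {μ : ℝ} (hd : 1 ≤ d) (hμ : μ < d) {E : Type*}
    [NormedAddCommGroup E] [NormedSpace ℝ E] [CompleteSpace E] {F : Eu d → E} 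
    (hF : ContDiff ℝ (⊤ : ℕ∞) F)
    (hFc : HasCompactSupport F) : ContDiff ℝ (⊤ : ℕ∞) (fun z => ∫ y, ‖y‖ ^ (-μ) • F (z - y)) :=
  hFc.contDiff_convolution_right (ContinuousLinearMap.lsmul ℝ ℝ) (rz_locint hd hμ) hF

lemma rz_conv_fderiv {d : ℕ} {μ : ℝ} (hd : 1 ≤ d) (hμ : μ < d) {E : Type*}
    [NormedAddCommGroup E] [NormedSpace ℝ E] [CompleteSpace E] {F : Eu d → E} 
    (hF : ContDiff ℝ (⊤ : ℕ∞) F) (hFc : HasCompactSupport F) (z : Eu d) :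
    fderiv ℝ (fun z => ∫ y, ‖y‖ ^ (-μ) • F (z - y)) z =
      ∫ y, ‖y‖ ^ (-μ) • fderiv ℝ F (z - y) := by
  have := hFc.hasFDerivAt_convolution_right (ContinuousLinearMap.lsmul ℝ ℝ) (rz_locint hd hμ)
    (hF.of_le (by exact_mod_cast le_top)) z
  exact this.fderiv

/-- `V` has bounded first and second derivatives. -/
lemma V_props {d : ℕ} {μ : ℝ} (hd : 1 ≤ d) (hμ0 : 0 ≤ μ) (hμ : μ < d) {f : Eu d → ℝ}
    (hf : ContDiff ℝ (⊤ : ℕ∞) f) (hfc : HasCompactSupport f) {V : Eu d → ℝ}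
    (hV : ∀ z, V z = ∫ y, f (z - y) * ‖y‖ ^ (-μ)) :
    ContDiff ℝ (⊤ : ℕ∞) V ∧ ContDiff ℝ 1 (gradient V) ∧
    ∃ K, 0 ≤ K ∧ (∀ z, ‖gradient V z‖ ≤ K) ∧ ∀ z, ‖fderiv ℝ (gradient V) z‖ ≤ K := by
  have e : V = fun z => ∫ y, ‖y‖ ^ (-μ) • f (z - y) := by
    ext z; rw [hV]; simp only [smul_eq_mul, mul_comm]
  have hVs : ContDiff ℝ (⊤ : ℕ∞) V := by rw [e]; exact rz_conv_smooth hd hμ hf hfc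
  have hf' : ContDiff ℝ (⊤ : ℕ∞) (fderiv ℝ f) := hf.fderiv_right (by simp)
  have hf'c : HasCompactSupport (fderiv ℝ f) := hfc.fderiv ℝ
  have hf''c : HasCompactSupport (fderiv ℝ (fderiv ℝ f)) := hf'c.fderiv ℝ
  have hV1 : fderiv ℝ V = fun z => ∫ y, ‖y‖ ^ (-μ) • fderiv ℝ f (z - y) := by
    ext1 z; rw [e]; exact rz_conv_fderiv hd hμ hf hfc z
  have hV2 : ∀ z, fderiv ℝ (fderiv ℝ V) z = ∫ y, ‖y‖ ^ (-μ) • fderiv ℝ (fderiv ℝ f) (z - y) := by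
    intro z; rw [hV1]; exact rz_conv_fderiv hd hμ hf' hf'c z
  obtain ⟨C1, h1⟩ := rz_conv_bdd hd hμ0 hμ hf'.continuous hf'c
  obtain ⟨C2, h2⟩ := rz_conv_bdd hd hμ0 hμ (hf'.continuous_fderiv (by simp)) hf''c
  have hgs : ContDiff ℝ 1 (gradient V) := by
    have : ContDiff ℝ 1 (fderiv ℝ V) :=
      (hVs.fderiv_right (m := (⊤ : ℕ∞)) (by simp)).of_le (by exact_mod_cast le_top)
    exact (InnerProductSpace.toDual ℝ (Eu d)).symm.contDiff.comp this
  have hVd : Differentiable ℝ (fderiv ℝ V) :=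
    (hVs.fderiv_right (m := (⊤ : ℕ∞)) (by simp)).differentiable (by simp)
  refine ⟨hVs, hgs, max C1 C2, ?_, fun z => ?_, fun z => ?_⟩
  · exact (norm_nonneg _).trans ((h1 0).trans (le_max_left _ _))
  · have : ‖gradient V z‖ = ‖fderiv ℝ V z‖ := by simp [gradient]
    rw [this, hV1]
    exact (h1 z).trans (le_max_left _ _)
  · have hl : LipschitzWith ⟨C2, (norm_nonneg _).trans (h2 0)⟩ (fderiv ℝ V) := by
      refine lipschitzWith_of_nnnorm_fderiv_le hVd fun z => ?_
      rw [hV2]; exact h2 z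
    have hl2 : LipschitzWith ⟨C2, (norm_nonneg _).trans (h2 0)⟩ (gradient V) := by
      refine LipschitzWith.of_dist_le_mul fun x y => ?_
      have : dist (gradient V x) (gradient V y) = dist (fderiv ℝ V x) (fderiv ℝ V y) := by
        simp [gradient, LinearIsometryEquiv.dist_map]
      rw [this]; exact hl.dist_le_mul x y
    exact (norm_fderiv_le_of_lipschitz ℝ hl2).trans (le_max_right _ _)

lemma b_C1 {d : ℕ} {w : Eu d → ℝ} {G : Eu d → Eu d} (hw : Integrable w) (hwc : Continuous w)
    (hG : ContDiff ℝ 1 G) {K : ℝ} (h1 : ∀ z, ‖G z‖ ≤ K) (h2 : ∀ z, ‖fderiv ℝ G z‖ ≤ K) :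
    ContDiff ℝ 1 (fun z => ∫ y, w y • G (z - y)) := by
  have hGc := hG.continuous
  have hG' : Continuous (fderiv ℝ G) := hG.continuous_fderiv (by simp)
  rw [contDiff_one_iff_hasFDerivAt]
  refine ⟨fun z => ∫ y, w y • fderiv ℝ G (z - y), ?_, fun z => ?_⟩
  · refine continuous_of_dominated (bound := fun y => ‖w y‖ * K) (fun z => ?_) (fun z => ?_)
      (hw.norm.mul_const K) ?_
    · exact (by fun_prop : Continuous fun y => w y • fderiv ℝ G (z - y)).aestronglyMeasurable
    · refine Filter.Eventually.of_forall fun y => ?_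
      rw [norm_smul]; gcongr; exact h2 _
    · refine Filter.Eventually.of_forall fun y => ?_
      fun_prop
  · refine hasFDerivAt_integral_of_dominated_of_fderiv_le (𝕜 := ℝ)
      (F := fun z y => w y • G (z - y)) (F' := fun z y => w y • fderiv ℝ G (z - y)) (bound := fun y => ‖w y‖ * K)
      (s := univ) Filter.univ_mem ?_ ?_ ?_ ?_ (hw.norm.mul_const K) ?_
    · exact Filter.Eventually.of_forall fun z =>
        (by fun_prop : Continuous fun y => w y • G (z - y)).aestronglyMeasurable
    · refine (hw.norm.mul_const K).mono'
        (by fun_prop : Continuous fun y => w y • G (z - y)).aestronglyMeasurable ?_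
      refine Filter.Eventually.of_forall fun y => ?_
      rw [norm_smul]; gcongr; exact h1 _
    · exact (by fun_prop : Continuous fun y => w y • fderiv ℝ G (z - y)).aestronglyMeasurable
    · refine Filter.Eventually.of_forall fun y z _ => ?_
      rw [norm_smul]; gcongr; exact h2 _
    · refine Filter.Eventually.of_forall fun y z _ => ?_
      have := (hG.differentiable (by simp) (z - y)).hasFDerivAt.comp z
        ((hasFDerivAt_id z).sub_const y)
      have h3 := this.const_smul (w y)
      rw [ContinuousLinearMap.comp_id] at h3
      exact h3

lemma rpow_diff1 {l a b : ℝ} (hl : 0 ≤ l) (ha : 0 < a) (hb : 0 < b) :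
    b ^ (-l) - a ^ (-l) ≤ l * |a - b| * b ^ (-(l + 1)) := by
  -- `a^{-l} ≥ b^{-l} (1 - l (a/b - 1))`
  have hx : 0 < a / b := by positivity
  have h1 : 1 - l * (a / b - 1) ≤ (a / b) ^ (-l) := by
    rw [Real.rpow_def_of_pos hx]
    have h2 := Real.add_one_le_exp (Real.log (a / b) * -l)
    have h3 := Real.log_le_sub_one_of_pos hx
    nlinarith
  have h4 : a ^ (-l) = b ^ (-l) * (a / b) ^ (-l) := by
    rw [← Real.mul_rpow hb.le hx.le]; congr 1; field_simp
  have h5 : b ^ (-(l + 1)) = b ^ (-l) / b := by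
    rw [neg_add, ← sub_eq_add_neg, Real.rpow_sub_one hb.ne']
  have h6 : 0 < b ^ (-l) := by positivity
  rw [h4, h5]
  calc b ^ (-l) - b ^ (-l) * (a / b) ^ (-l) ≤ b ^ (-l) - b ^ (-l) * (1 - l * (a / b - 1)) := by
        gcongr
    _ = l * (a - b) * (b ^ (-l) / b) := by field_simp; ring
    _ ≤ _ := by gcongr; exact le_abs_self _

lemma rpow_diff {l a b : ℝ} (hl : 0 ≤ l) (ha : 0 < a) (hb : 0 < b) :
    |a ^ (-l) - b ^ (-l)| ≤ l * |a - b| * (a ^ (-(l + 1)) + b ^ (-(l + 1))) := by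
  have h1 := rpow_diff1 hl ha hb
  have h2 := rpow_diff1 hl hb ha
  rw [abs_sub_comm b a] at h2
  have h3 : 0 ≤ l * |a - b| * a ^ (-(l + 1)) := by positivity
  have h4 : 0 ≤ l * |a - b| * b ^ (-(l + 1)) := by positivity
  rw [abs_le]; constructor <;> linarith

lemma rz_change {d : ℕ} (f : Eu d → ℝ) (m : ℝ) (z : Eu d) :
    ∫ y, ‖y‖ ^ (-m) • f (z - y) = ∫ y, f y * ‖z - y‖ ^ (-m) := by
  rw [← integral_sub_left_eq_self _ volume z]
  simp [mul_comm]

lemma rz_changeI {d : ℕ} (hd : 1 ≤ d) {f : Eu d → ℝ} (hf : Continuous f)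
    (hfc : HasCompactSupport f) {m : ℝ} (hm : m < d) (z : Eu d) :
    Integrable (fun y => f y * ‖z - y‖ ^ (-m)) := by
  have := (rz_conv_int hd hm hf hfc z).comp_sub_left z
  simpa [mul_comm] using this

lemma grad_lip {d : ℕ} {l : ℝ} (hd : 1 ≤ d) (hl : 0 ≤ l) (hld : l + 1 < d) {f : Eu d → ℝ}
    (hf : Continuous f) (hfc : HasCompactSupport f) (hf0 : ∀ x, 0 ≤ f x) (x z : Eu d) :
    |(∫ y, f y * ‖x - y‖ ^ (-l)) - ∫ y, f y * ‖z - y‖ ^ (-l)| ≤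
      l * ((∫ y, f y * ‖x - y‖ ^ (-(l + 1))) + ∫ y, f y * ‖z - y‖ ^ (-(l + 1))) * ‖x - z‖ := by
  have hl' : l < d := by linarith
  have : Nonempty (Fin d) := ⟨⟨0, hd⟩⟩
  have c1 := rz_changeI hd hf hfc hl' x
  have c2 := rz_changeI hd hf hfc hl' z
  have c3 := rz_changeI hd hf hfc hld x
  have c4 := rz_changeI hd hf hfc hld z
  have key : ∀ᵐ y : Eu d, ‖f y * ‖x - y‖ ^ (-l) - f y * ‖z - y‖ ^ (-l)‖ ≤
      (l * ‖x - z‖) * (f y * ‖x - y‖ ^ (-(l + 1)) + f y * ‖z - y‖ ^ (-(l + 1))) := by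
    have hx : ∀ᵐ y : Eu d, y ≠ x := by
      simp [ae_iff, measure_singleton]
    have hz : ∀ᵐ y : Eu d, y ≠ z := by
      simp [ae_iff, measure_singleton]
    filter_upwards [hx, hz] with y hyx hyz
    have p1 : 0 < ‖x - y‖ := norm_pos_iff.2 (sub_ne_zero.2 hyx.symm)
    have p2 : 0 < ‖z - y‖ := norm_pos_iff.2 (sub_ne_zero.2 hyz.symm)
    have h1 := rpow_diff hl p1 p2
    have h2 : |‖x - y‖ - ‖z - y‖| ≤ ‖x - z‖ := by
      have := abs_norm_sub_norm_le (x - y) (z - y)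
      rwa [sub_sub_sub_cancel_right] at this
    rw [← mul_sub, Real.norm_eq_abs, abs_mul, abs_of_nonneg (hf0 y)]
    have hfy := hf0 y
    calc f y * |‖x - y‖ ^ (-l) - ‖z - y‖ ^ (-l)| ≤ f y * (l * ‖x - z‖ *
        (‖x - y‖ ^ (-(l + 1)) + ‖z - y‖ ^ (-(l + 1)))) := by
          refine mul_le_mul_of_nonneg_left (h1.trans ?_) hfy
          refine mul_le_mul_of_nonneg_right (mul_le_mul_of_nonneg_left h2 hl) (by positivity)
      _ = _ := by ring
  have h3 := norm_integral_le_of_norm_le ((c3.add c4).const_mul (l * ‖x - z‖)) key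
  rw [integral_sub c1 c2, integral_const_mul] at h3
  have h4 : ∫ y, ((fun y => f y * ‖x - y‖ ^ (-(l + 1))) + fun y => f y * ‖z - y‖ ^ (-(l + 1))) y
    = (∫ y, f y * ‖x - y‖ ^ (-(l + 1))) + ∫ y, f y * ‖z - y‖ ^ (-(l + 1)) := integral_add c3 c4
  rw [h4, Real.norm_eq_abs] at h3
  exact h3.trans_eq (by ring)

lemma grad_bound {d : ℕ} {l : ℝ} (hd : 1 ≤ d) (hl : 0 ≤ l) (hld : l + 1 < d) {f : Eu d → ℝ}
    (hf : ContDiff ℝ (⊤ : ℕ∞) f) (hfc : HasCompactSupport f) (hf0 : ∀ x, 0 ≤ f x) {V : Eu d → ℝ}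
    (hV : ∀ z, V z = ∫ y, f (z - y) * ‖y‖ ^ (-l)) (z : Eu d) :
    ‖gradient V z‖ ≤ 2 * l * ∫ y, f y * ‖z - y‖ ^ (-(l + 1)) := by
  have hV' : ∀ z, V z = ∫ y, f y * ‖z - y‖ ^ (-l) := fun z => by
    rw [hV, ← rz_change]; simp only [smul_eq_mul, mul_comm]
  obtain ⟨U, hU⟩ : ∃ U : Eu d → ℝ, ∀ z, U z = ∫ y, f y * ‖z - y‖ ^ (-(l + 1)) := ⟨_, fun _ => rfl⟩
  have hUc : Continuous U := by
    have := (rz_conv_smooth hd hld hf hfc).continuous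
    refine this.congr fun z => ?_
    rw [hU, rz_change]
  have lip : ∀ x, |V x - V z| ≤ l * (U x + U z) * ‖x - z‖ := by
    intro x
    rw [hV', hV', hU, hU]; exact grad_lip hd hl hld hf.continuous hfc hf0 x z
  have hU0 : 0 ≤ U z := by
    rw [hU]; exact integral_nonneg fun y => mul_nonneg (hf0 _) (Real.rpow_nonneg (norm_nonneg _) _)
  have e : ‖gradient V z‖ = ‖fderiv ℝ V z‖ := by simp [gradient]
  rw [e, ← hU]
  refine le_of_forall_pos_le_add fun ε hε => ?_
  refine norm_fderiv_le_of_lip' ℝ (by positivity) ?_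
  have : Filter.Tendsto (fun x => l * (U x + U z)) (nhds z) (nhds (l * (U z + U z))) :=
    ((hUc.tendsto z).add_const _).const_mul l
  have ev := this.eventually (gt_mem_nhds (show l * (U z + U z) < 2 * l * U z + ε by linarith))
  filter_upwards [ev] with x hx
  rw [Real.norm_eq_abs]
  exact (lip x).trans (mul_le_mul_of_nonneg_right hx.le (norm_nonneg _))

lemma exp_gc {d : ℕ} {u : ℝ} (hu : 0 < u) (g : Eu d → ℝ) (z : Eu d) :
    ∫ v, g v * Real.exp (-(u * ‖z - v‖ ^ 2)) = u ^ (-(d : ℝ) / 2) * gc u⁻¹ g z := by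
  unfold gc gk
  rw [← integral_const_mul]
  congr 1; ext v
  have : (u⁻¹) ^ (-(d : ℝ) / 2) = (u ^ (-(d : ℝ) / 2))⁻¹ := Real.inv_rpow hu.le _
  rw [this, inv_inv]
  have : u ^ (-(d : ℝ) / 2) ≠ 0 := by positivity
  field_simp

lemma exp_gc_int {d : ℕ} {u : ℝ} (hu : 0 < u) {g : Eu d → ℝ} (hg : Integrable g) (z : Eu d) :
    Integrable (fun v => g v * Real.exp (-(u * ‖z - v‖ ^ 2))) := by
  have := (gc_int (inv_pos.2 hu) hg z).const_mul (u ^ (-(d : ℝ) / 2))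
  refine this.congr (Filter.Eventually.of_forall fun v => ?_)
  unfold gk
  have : (u⁻¹) ^ (-(d : ℝ) / 2) = (u ^ (-(d : ℝ) / 2))⁻¹ := Real.inv_rpow hu.le _
  simp only [this, inv_inv]
  have : u ^ (-(d : ℝ) / 2) ≠ 0 := by positivity
  field_simp

lemma lin_bound {d : ℕ} {u D : ℝ} (hu : 0 < u) {g h : Eu d → ℝ} (hg : Integrable g)
    (hg0 : ∀ x, 0 ≤ g x) (hh : Integrable h) (hh0 : ∀ x, 0 ≤ h x) (hh1 : ∫ x, h x = 1)
    (hD : ∀ z, ∫ v, g v * Real.exp (-(u * ‖z - v‖ ^ 2)) ≤ D) (x : Eu d) :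
    ∫⁻ y, ∫⁻ v, ENNReal.ofReal (h y) * ENNReal.ofReal (g v * Real.exp (-(u * ‖x - y - v‖ ^ 2)))
      ≤ ENNReal.ofReal D := by
  have e : ∀ y, ∫⁻ v, ENNReal.ofReal (h y) *
      ENNReal.ofReal (g v * Real.exp (-(u * ‖x - y - v‖ ^ 2))) ≤
      ENNReal.ofReal (h y) * ENNReal.ofReal D := by
    intro y
    rw [lintegral_const_mul' _ _ ENNReal.ofReal_ne_top]
    gcongr
    rw [← ofReal_integral_eq_lintegral_ofReal (exp_gc_int hu hg (x - y))
      (Filter.Eventually.of_forall fun v => mul_nonneg (hg0 v) (Real.exp_pos _).le)]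
    exact ENNReal.ofReal_le_ofReal (hD _)
  refine (lintegral_mono e).trans ?_
  rw [lintegral_mul_const' _ _ ENNReal.ofReal_ne_top,
    ← ofReal_integral_eq_lintegral_ofReal hh (Filter.Eventually.of_forall hh0), hh1]
  simp

lemma riesz_gamma {m r : ℝ} (hm : 0 < m) (hr : 0 ≤ r) :
    ENNReal.ofReal (r ^ (-m)) ≤ ENNReal.ofReal (1 / Real.Gamma (m / 2)) *
      ∫⁻ u in Ioi (0:ℝ), ENNReal.ofReal (u ^ (m / 2 - 1) * Real.exp (-(u * r ^ 2))) := by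
  rcases hr.eq_or_lt with rfl | hr
  · rw [Real.zero_rpow (by linarith)]; simp
  have hG : 0 < Real.Gamma (m / 2) := Real.Gamma_pos_of_pos (by linarith)
  have h := Real.integral_rpow_mul_exp_neg_mul_Ioi (a := m / 2) (r := r ^ 2) (by linarith)
    (by positivity)
  have hI : IntegrableOn (fun u : ℝ => u ^ (m / 2 - 1) * Real.exp (-(r ^ 2 * u))) (Ioi 0) := by
    by_contra hc
    rw [integral_undef hc] at h
    have : 0 < (1 / r ^ 2) ^ (m / 2) * Real.Gamma (m / 2) := by positivity
    linarith
  have e : ∫⁻ u in Ioi (0:ℝ), ENNReal.ofReal (u ^ (m / 2 - 1) * Real.exp (-(u * r ^ 2))) =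
      ENNReal.ofReal ((1 / r ^ 2) ^ (m / 2) * Real.Gamma (m / 2)) := by
    rw [← h, ofReal_integral_eq_lintegral_ofReal hI]
    · simp only [mul_comm]
    · filter_upwards [ae_restrict_mem measurableSet_Ioi] with u hu
      have : (0:ℝ) < u := hu
      simp only [Pi.zero_apply]; positivity
  rw [e, ← ENNReal.ofReal_mul (by positivity)]
  refine ENNReal.ofReal_le_ofReal (le_of_eq ?_)
  have e2 : (1 / r ^ 2) ^ (m / 2) = r ^ (-m) := by
    rw [one_div, Real.inv_rpow (by positivity), ← Real.rpow_natCast, ← Real.rpow_mul hr.le,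
      Real.rpow_neg hr.le]
    congr 2; push_cast; ring
  rw [e2]; field_simp

lemma swap_riesz {d : ℕ} {m : ℝ} (hm : 0 < m) {g h : Eu d → ℝ} (hg : Measurable g)
    (hh : Measurable h) (hg0 : ∀ x, 0 ≤ g x) (x : Eu d) :
    ∫⁻ y, ∫⁻ v, ENNReal.ofReal (h y) * ENNReal.ofReal (g v * ‖x - y - v‖ ^ (-m)) ≤
    ENNReal.ofReal (1 / Real.Gamma (m / 2)) * ∫⁻ u in Ioi (0:ℝ), ENNReal.ofReal (u ^ (m / 2 - 1)) *
      ∫⁻ y, ∫⁻ v, ENNReal.ofReal (h y) *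
        ENNReal.ofReal (g v * Real.exp (-(u * ‖x - y - v‖ ^ 2))) := by
  have m1 : Measurable fun p : Eu d × Eu d =>
      ENNReal.ofReal (h p.1) * ENNReal.ofReal (g p.2 * ‖x - p.1 - p.2‖ ^ (-m)) := by fun_prop
  have m2 : ∀ u : ℝ, Measurable fun p : Eu d × Eu d => ENNReal.ofReal (h p.1) *
        ENNReal.ofReal (g p.2 * Real.exp (-(u * ‖x - p.1 - p.2‖ ^ 2))) := by intro u; fun_prop
  have m3 : Measurable fun q : (Eu d × Eu d) × ℝ => ENNReal.ofReal (h q.1.1) *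
      (ENNReal.ofReal (g q.1.2) *
        ENNReal.ofReal (q.2 ^ (m / 2 - 1) * Real.exp (-(q.2 * ‖x - q.1.1 - q.1.2‖ ^ 2)))) := by
    fun_prop
  rw [← lintegral_prod _ m1.aemeasurable]
  have e2 : ∀ u : ℝ, ∫⁻ y, ∫⁻ v, ENNReal.ofReal (h y) *
        ENNReal.ofReal (g v * Real.exp (-(u * ‖x - y - v‖ ^ 2))) =
      ∫⁻ p : Eu d × Eu d, ENNReal.ofReal (h p.1) *
        ENNReal.ofReal (g p.2 * Real.exp (-(u * ‖x - p.1 - p.2‖ ^ 2))) := fun u => by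
    rw [Measure.volume_eq_prod, lintegral_prod _ (m2 u).aemeasurable]
  simp only [e2]
  have e3 : ∀ p : Eu d × Eu d,
      ENNReal.ofReal (h p.1) * ENNReal.ofReal (g p.2 * ‖x - p.1 - p.2‖ ^ (-m)) ≤
      ENNReal.ofReal (1 / Real.Gamma (m / 2)) * ∫⁻ u in Ioi (0:ℝ), ENNReal.ofReal (h p.1) *
      (ENNReal.ofReal (g p.2) *
        ENNReal.ofReal (u ^ (m / 2 - 1) * Real.exp (-(u * ‖x - p.1 - p.2‖ ^ 2)))) := by
    intro p
    rw [lintegral_const_mul' _ _ ENNReal.ofReal_ne_top,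
      lintegral_const_mul' _ _ ENNReal.ofReal_ne_top, ENNReal.ofReal_mul (hg0 _)]
    have hr := riesz_gamma hm (norm_nonneg (x - p.1 - p.2))
    refine (mul_le_mul' le_rfl (mul_le_mul' le_rfl hr)).trans_eq ?_
    ring
  refine (lintegral_mono e3).trans ?_
  rw [lintegral_const_mul' _ _ ENNReal.ofReal_ne_top]
  gcongr
  rw [lintegral_lintegral_swap m3.aemeasurable, ← Measure.volume_eq_prod]
  refine le_of_eq (setLIntegral_congr_fun measurableSet_Ioi fun u hu => ?_)
  have hu : (0:ℝ) < u := hu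
  rw [← lintegral_const_mul' _ _ ENNReal.ofReal_ne_top]
  refine lintegral_congr fun p => ?_
  rw [ENNReal.ofReal_mul (hg0 _), ENNReal.ofReal_mul (by positivity)]
  ring

lemma lint_Ioi {r c : ℝ} (hr : r < -1) (hc : 0 < c) :
    ∫⁻ u in Ioi c, ENNReal.ofReal (u ^ r) = ENNReal.ofReal (-c ^ (r + 1) / (r + 1)) := by
  rw [← integral_Ioi_rpow_of_lt hr hc,
    ofReal_integral_eq_lintegral_ofReal (integrableOn_Ioi_rpow_of_lt hr hc)]
  filter_upwards [ae_restrict_mem measurableSet_Ioi] with u hu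
  have : (0:ℝ) < u := hc.trans hu
  simp only [Pi.zero_apply]; positivity

lemma lint_Ioc {r c : ℝ} (hr : -1 < r) (hc : 0 < c) :
    ∫⁻ u in Ioc 0 c, ENNReal.ofReal (u ^ r) = ENNReal.ofReal (c ^ (r + 1) / (r + 1)) := by
  have h1 := integral_rpow (a := 0) (b := c) (r := r) (Or.inl hr)
  rw [Real.zero_rpow (by linarith), sub_zero, intervalIntegral.integral_of_le hc.le] at h1
  have h2 := (intervalIntegral.intervalIntegrable_rpow' (a := 0) (b := c) hr).1
  rw [← h1, ofReal_integral_eq_lintegral_ofReal h2]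
  filter_upwards [ae_restrict_mem measurableSet_Ioc] with u hu
  have : (0:ℝ) < u := hu.1
  simp only [Pi.zero_apply]; positivity

lemma final_int {S Z : ℝ} (hS : 0 < S) (hZ : 0 ≤ Z) :
    ∫⁻ u in Ioi (0:ℝ), ENNReal.ofReal (Z * (u ^ (-(1/2) : ℝ) / (1 + S * u))) ≤
      ENNReal.ofReal (4 * Z / √S) := by
  have hc : 0 < 1 / S := by positivity
  rw [← Ioc_union_Ioi_eq_Ioi hc.le]
  refine (lintegral_union_le _ _ _).trans ?_
  have h1 : ∫⁻ u in Ioc 0 (1/S), ENNReal.ofReal (Z * (u ^ (-(1/2) : ℝ) / (1 + S * u))) ≤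
      ENNReal.ofReal (2 * Z / √S) := by
    calc _ ≤ ∫⁻ u in Ioc 0 (1/S), ENNReal.ofReal Z * ENNReal.ofReal (u ^ (-(1/2) : ℝ)) := by
          refine setLIntegral_mono' measurableSet_Ioc fun u hu => ?_
          rw [← ENNReal.ofReal_mul hZ]
          refine ENNReal.ofReal_le_ofReal ?_
          have : 0 < u := hu.1
          gcongr
          exact div_le_self (by positivity) (by nlinarith [mul_pos hS this])
      _ = _ := by
          rw [lintegral_const_mul' _ _ ENNReal.ofReal_ne_top, lint_Ioc (by norm_num) hc,
            ← ENNReal.ofReal_mul hZ]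
          congr 1
          norm_num
          rw [← Real.sqrt_eq_rpow, Real.sqrt_inv]
          ring
  have h2 : ∫⁻ u in Ioi (1/S), ENNReal.ofReal (Z * (u ^ (-(1/2) : ℝ) / (1 + S * u))) ≤
      ENNReal.ofReal (2 * Z / √S) := by
    calc _ ≤ ∫⁻ u in Ioi (1/S), ENNReal.ofReal (Z / S) * ENNReal.ofReal (u ^ (-(3/2) : ℝ)) := by
          refine setLIntegral_mono' measurableSet_Ioi fun u hu => ?_
          rw [← ENNReal.ofReal_mul (by positivity)]
          refine ENNReal.ofReal_le_ofReal ?_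
          have hu0 : 0 < u := hc.trans hu
          have : u ^ (-(3/2) : ℝ) = u ^ (-(1/2) : ℝ) / u := by
            rw [← Real.rpow_sub_one hu0.ne']; norm_num
          rw [this, div_mul_div_comm, ← mul_div_assoc]
          gcongr
          linarith
      _ = _ := by
          rw [lintegral_const_mul' _ _ ENNReal.ofReal_ne_top, lint_Ioi (by norm_num) hc,
            ← ENNReal.ofReal_mul (by positivity)]
          congr 1
          have : (1 / S) ^ (-(3 / 2) + 1 : ℝ) = √S := by
            rw [one_div, Real.inv_rpow hS.le, ← Real.rpow_neg hS.le, Real.sqrt_eq_rpow]; norm_num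
          rw [this]
          have h3 : √S * √S = S := Real.mul_self_sqrt hS.le
          have : 0 < √S := Real.sqrt_pos.2 hS
          field_simp
          rw [sq, h3]; norm_num
          try ring
  refine (add_le_add h1 h2).trans_eq ?_
  rw [← ENNReal.ofReal_add (by positivity) (by positivity)]
  congr 1; ring

lemma core_bound {d : ℕ} {l S Z δ B : ℝ} (hl : 0 < l) (hld : l < (d : ℝ) - 2) (hS : 0 < S)
    (hZ : 0 ≤ Z) (hδ : 0 < δ) {w f : Eu d → ℝ} (hw : Integrable w) (hwm : Measurable w)
    (hw0 : ∀ x, 0 ≤ w x)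
    (hw1 : ∫ x, w x = 1) (hf : Integrable f) (hfm : Measurable f) (hf0 : ∀ x, 0 ≤ f x)
    (hf1 : ∫ x, f x = 1)
    (hB0 : 0 ≤ B) (hfB : ∀ x, f x ≤ B)
    (hyp : ∀ τ, δ ≤ τ → ∀ x, (S + τ) ^ (((d : ℝ) - l) / 2) * gc τ w x ≤ Z) (x : Eu d) :
    ∫⁻ y, ∫⁻ v, ENNReal.ofReal (w y) * ENNReal.ofReal (f v * ‖x - y - v‖ ^ (-(l + 1))) ≤
    ENNReal.ofReal (1 / Real.Gamma ((l + 1) / 2) * (4 * Z / √S +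
      B * Real.pi ^ ((d : ℝ) / 2) * (δ ^ (((d : ℝ) - l - 1) / 2) / (((d : ℝ) - l - 1) / 2)))) := by
  have hG : 0 < Real.Gamma ((l + 1) / 2) := Real.Gamma_pos_of_pos (by linarith)
  refine (swap_riesz (by linarith) hfm hwm hf0 x).trans ?_
  rw [ENNReal.ofReal_mul (by positivity)]
  gcongr
  have hq : (0:ℝ) < ((d : ℝ) - l - 1) / 2 := by linarith
  have hP : (0:ℝ) < Real.pi ^ ((d : ℝ) / 2) := by have := Real.pi_pos; positivity
  -- pointwise bounds
  have pt : ∀ u ∈ Ioi (0:ℝ), ENNReal.ofReal (u ^ ((l + 1) / 2 - 1)) *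
      (∫⁻ y, ∫⁻ v, ENNReal.ofReal (w y) *
        ENNReal.ofReal (f v * Real.exp (-(u * ‖x - y - v‖ ^ 2)))) ≤
      ENNReal.ofReal (Z * (u ^ (-(1/2) : ℝ) / (1 + S * u))) +
      (Ioi (1/δ)).indicator (fun u => ENNReal.ofReal (B * Real.pi ^ ((d : ℝ) / 2)) *
        ENNReal.ofReal (u ^ (-(((d : ℝ) - l - 1) / 2) - 1))) u := by
    intro u hu
    have hu : 0 < u := hu
    rcases le_or_gt u (1/δ) with h | h
    · refine le_trans ?_ le_self_add
      have hτ : δ ≤ u⁻¹ := by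
        rw [le_inv_comm₀ hδ hu]; rwa [one_div] at h
      have e : ∫⁻ y, ∫⁻ v, ENNReal.ofReal (w y) *
          ENNReal.ofReal (f v * Real.exp (-(u * ‖x - y - v‖ ^ 2))) =
          ∫⁻ v, ∫⁻ y, ENNReal.ofReal (f v) *
          ENNReal.ofReal (w y * Real.exp (-(u * ‖x - v - y‖ ^ 2))) := by
        rw [lintegral_lintegral_swap]
        · refine lintegral_congr fun v => lintegral_congr fun y => ?_
          rw [ENNReal.ofReal_mul (hf0 _), ENNReal.ofReal_mul (hw0 _), sub_right_comm]
          ring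
        · refine Measurable.aemeasurable ?_
          unfold Function.uncurry
          fun_prop
      rw [e]
      have hSp : 0 < S + u⁻¹ := by positivity
      have hb := lin_bound (D := u ^ (-(d : ℝ) / 2) * (Z * (S + u⁻¹) ^ (-(((d : ℝ) - l) / 2)))) hu hw hw0 hf hf0 hf1
        (by
          intro z
          rw [exp_gc hu]
          have := hyp u⁻¹ hτ z
          gcongr
          rw [Real.rpow_neg hSp.le, ← div_eq_mul_inv, le_div_iff₀ (by positivity)]
          linarith) x
      refine (mul_le_mul' le_rfl hb).trans ?_
      rw [← ENNReal.ofReal_mul (by positivity)]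
      refine ENNReal.ofReal_le_ofReal ?_
      have e1 : S + u⁻¹ = u⁻¹ * (1 + S * u) := by field_simp; ring
      have hp : 0 < 1 + S * u := by positivity
      rw [e1, Real.mul_rpow (by positivity) hp.le]
      have e2 : (u⁻¹) ^ (-(((d : ℝ) - l) / 2)) = u ^ (((d : ℝ) - l) / 2) := by
        rw [Real.inv_rpow hu.le, ← Real.rpow_neg hu.le, neg_neg]
      rw [e2]
      have e3 : u ^ ((l + 1) / 2 - 1) * u ^ (-(d : ℝ) / 2) * u ^ (((d : ℝ) - l) / 2) =
          u ^ (-(1/2) : ℝ) := by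
        rw [← Real.rpow_add hu, ← Real.rpow_add hu]; congr 1; ring
      have e4 : (1 + S * u) ^ (-(((d : ℝ) - l) / 2)) ≤ (1 + S * u)⁻¹ := by
        rw [← Real.rpow_neg_one]
        exact Real.rpow_le_rpow_of_exponent_le (by nlinarith [mul_pos hS hu]) (by linarith)
      calc _ = (u ^ ((l + 1) / 2 - 1) * u ^ (-(d : ℝ) / 2) * u ^ (((d : ℝ) - l) / 2)) *
            Z * (1 + S * u) ^ (-(((d : ℝ) - l) / 2)) := by ring
        _ ≤ u ^ (-(1/2) : ℝ) * Z * (1 + S * u)⁻¹ := by rw [e3]; gcongr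
        _ = _ := by rw [div_eq_mul_inv]; ring
    · refine le_trans ?_ le_add_self
      rw [indicator_of_mem (show u ∈ Ioi (1/δ) from h)]
      have hb := lin_bound (D := u ^ (-(d : ℝ) / 2) * (B * Real.pi ^ ((d : ℝ) / 2))) hu hf hf0 hw hw0 hw1
        (by
          intro z
          rw [exp_gc hu]
          have := gc_le_sup (inv_pos.2 hu) hf hfB z
          gcongr) x
      refine (mul_le_mul' le_rfl hb).trans ?_
      rw [← ENNReal.ofReal_mul (by positivity), ← ENNReal.ofReal_mul (by positivity)]
      refine ENNReal.ofReal_le_ofReal (le_of_eq ?_)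
      have e3 : u ^ (-(((d : ℝ) - l - 1) / 2) - 1) = u ^ ((l + 1) / 2 - 1) * u ^ (-(d : ℝ) / 2) := by
        rw [← Real.rpow_add hu]; congr 1; ring
      rw [e3]; ring
  refine (setLIntegral_mono' measurableSet_Ioi pt).trans ?_
  rw [lintegral_add_left (by fun_prop), ENNReal.ofReal_add (by positivity) (by positivity)]
  refine add_le_add (final_int hS hZ) ?_
  rw [lintegral_indicator measurableSet_Ioi]
  refine (lintegral_mono' (Measure.restrict_mono le_rfl Measure.restrict_le_self) le_rfl).trans ?_
  rw [lintegral_const_mul' _ _ ENNReal.ofReal_ne_top, lint_Ioi (by linarith) (by positivity),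
    ← ENNReal.ofReal_mul (by positivity)]
  refine ENNReal.ofReal_le_ofReal (le_of_eq ?_)
  rw [sub_add_cancel, one_div, Real.inv_rpow hδ.le, ← Real.rpow_neg hδ.le, neg_neg]
  congr 1
  rw [neg_div_neg_eq]

lemma drift_ctl {d : ℕ} {l σ T : ℝ} (hd : 1 ≤ d) (hl : 0 < l) (hld : l < (d : ℝ) - 2)
    (hσ : 0 < σ) {w : ℝ → Eu d → ℝ} (hw : ∀ t ∈ Icc (0:ℝ) T, Integrable (w t))
    (hwc : ∀ t ∈ Icc (0:ℝ) T, Continuous (w t)) (hw0 : ∀ t ∈ Icc (0:ℝ) T, ∀ x, 0 ≤ w t x)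
    (hw1 : ∀ t ∈ Icc (0:ℝ) T, ∫ x, w t x = 1) {f : Eu d → ℝ} (hf : ContDiff ℝ (⊤ : ℕ∞) f)
    (hfc : HasCompactSupport f) (hf0 : ∀ x, 0 ≤ f x) (hf1 : ∫ x, f x = 1) {V : Eu d → ℝ}
    (hV : ∀ z, V z = ∫ y, f (z - y) * ‖y‖ ^ (-l)) :
    DriftCtl σ T (((d : ℝ) - l) / 2) (8 * l / Real.Gamma ((l + 1) / 2))
      (fun t z => ∫ y, w t y • gradient V (z - y)) w := by
  have hG : 0 < Real.Gamma ((l + 1) / 2) := Real.Gamma_pos_of_pos (by linarith)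
  have hq : (0:ℝ) < ((d : ℝ) - l - 1) / 2 := by linarith
  have hfi : Integrable f := hf.continuous.integrable_of_hasCompactSupport hfc
  obtain ⟨B, hB⟩ := hfc.exists_bound_of_continuous hf.continuous
  have hB0 : 0 ≤ B := (norm_nonneg _).trans (hB 0)
  have hfB : ∀ x, f x ≤ B := fun x => (le_abs_self _).trans (hB x)
  intro e he
  have hlim : Filter.Tendsto (fun δ : ℝ => 2 * l * (1 / Real.Gamma ((l + 1) / 2) *
      (B * Real.pi ^ ((d : ℝ) / 2) * (δ ^ (((d : ℝ) - l - 1) / 2) / (((d : ℝ) - l - 1) / 2)))))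
      (nhdsWithin 0 (Ioi 0)) (nhds 0) := by
    have h1 : Continuous (fun δ : ℝ => 2 * l * (1 / Real.Gamma ((l + 1) / 2) *
      (B * Real.pi ^ ((d : ℝ) / 2) * (δ ^ (((d : ℝ) - l - 1) / 2) / (((d : ℝ) - l - 1) / 2))))) := by
      have : Continuous (fun δ : ℝ => δ ^ (((d : ℝ) - l - 1) / 2)) :=
        Real.continuous_rpow_const hq.le
      fun_prop
    have h2 := h1.tendsto 0
    rw [Real.zero_rpow hq.ne'] at h2
    simp only [zero_div, mul_zero] at h2
    exact h2.mono_left nhdsWithin_le_nhds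
  obtain ⟨δ, hδe, hδ⟩ := ((hlim.eventually (gt_mem_nhds he)).and self_mem_nhdsWithin).exists
  have hδ : 0 < δ := hδ
  refine ⟨δ, hδ, fun s hs Z hZ hyp x => ?_⟩
  have hsI : s ∈ Icc 0 T := ⟨hs.1.le, hs.2⟩
  have hS : 0 < 4 * σ * s := by have := hs.1; positivity
  have core := core_bound hl hld hS hZ hδ (hw s hsI) (hwc s hsI).measurable (hw0 s hsI)
    (hw1 s hsI) hfi hf.continuous.measurable hf0 hf1 hB0 hfB hyp x
  have hl1 : l + 1 < d := by linarith
  set R := (1 / Real.Gamma ((l + 1) / 2) * (4 * Z / √(4 * σ * s) +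
      B * Real.pi ^ ((d : ℝ) / 2) * (δ ^ (((d : ℝ) - l - 1) / 2) / (((d : ℝ) - l - 1) / 2)))) with hR
  have hR0 : 0 ≤ R := by have := Real.pi_pos; positivity
  have h1 : ∫⁻ y, ENNReal.ofReal ‖w s y • gradient V (x - y)‖ ≤ ENNReal.ofReal (2 * l * R) := by
    rw [ENNReal.ofReal_mul (by positivity)]
    refine le_trans ?_ (mul_le_mul' le_rfl core)
    rw [← lintegral_const_mul' _ _ ENNReal.ofReal_ne_top]
    refine lintegral_mono fun y => ?_
    simp only
    rw [lintegral_const_mul' _ _ ENNReal.ofReal_ne_top,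
      ← ofReal_integral_eq_lintegral_ofReal (rz_changeI hd hf.continuous hfc hl1 (x - y))
      (Filter.Eventually.of_forall fun v => mul_nonneg (hf0 v) (Real.rpow_nonneg (norm_nonneg _) _)),
      ← ENNReal.ofReal_mul (hw0 s hsI y), ← ENNReal.ofReal_mul (by positivity)]
    refine ENNReal.ofReal_le_ofReal ?_
    rw [norm_smul, Real.norm_of_nonneg (hw0 s hsI y)]
    have := mul_le_mul_of_nonneg_left (grad_bound hd hl.le hl1 hf hfc hf0 hV (x - y)) (hw0 s hsI y)
    linarith
  have h2 := norm_integral_le_lintegral_norm (μ := volume) (fun y => w s y • gradient V (x - y))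
  have h3 := h2.trans (ENNReal.toReal_mono ENNReal.ofReal_ne_top h1)
  rw [ENNReal.toReal_ofReal (by positivity)] at h3
  refine h3.trans ?_
  have h4 : 2 * l * R = 8 * l / Real.Gamma ((l + 1) / 2) * Z / √(4 * σ * s) +
    2 * l * (1 / Real.Gamma ((l + 1) / 2) *
      (B * Real.pi ^ ((d : ℝ) / 2) * (δ ^ (((d : ℝ) - l - 1) / 2) / (((d : ℝ) - l - 1) / 2)))) := by
    rw [hR]; ring
  rw [h4]; gcongr

lemma gk_rpow {d : ℕ} {τ q : ℝ} (hτ : 0 < τ) (z : Eu d) :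
    gk τ z ^ q = τ ^ (-(d : ℝ) / 2 * q) * Real.exp (-((q / τ) * ‖z‖ ^ 2)) := by
  unfold gk
  rw [Real.mul_rpow (by positivity) (by positivity), ← Real.rpow_mul hτ.le, ← Real.exp_mul]
  congr 2; ring

lemma holder_init {d : ℕ} {l τ : ℝ} (hd : 0 < d) (hl : 0 < l) (hld : l < (d : ℝ)) (hτ : 0 < τ)
    {w : Eu d → ℝ} (hw0 : ∀ x, 0 ≤ w x)
    (hw : MemLp w (ENNReal.ofReal ((d : ℝ) / ((d : ℝ) - l)))) (x : Eu d) :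
    τ ^ (((d : ℝ) - l) / 2) * gc τ w x ≤ (Real.pi * l / d) ^ (l / 2) *
      (eLpNorm w (ENNReal.ofReal ((d : ℝ) / ((d : ℝ) - l))) volume).toReal := by
  have hdr : (0:ℝ) < d := by exact_mod_cast hd
  have hdl : 0 < (d : ℝ) - l := by linarith
  have hpi := Real.pi_pos
  obtain ⟨p, hp⟩ : ∃ p : ℝ, p = (d : ℝ) / ((d : ℝ) - l) := ⟨_, rfl⟩
  obtain ⟨q, hq⟩ : ∃ q : ℝ, q = (d : ℝ) / l := ⟨_, rfl⟩
  have hq0 : 0 < q := by rw [hq]; positivity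
  have hp1 : 1 < p := by rw [hp, lt_div_iff₀ hdl]; linarith
  have hpq : q.HolderConjugate p := by
    refine Real.HolderConjugate.symm ?_
    rw [Real.holderConjugate_iff]
    refine ⟨hp1, ?_⟩
    rw [hp, hq]; field_simp; ring
  rw [← hp] at hw ⊢
  have hb : 0 < q / τ := by positivity
  have hgi : Integrable (fun y => gk τ (x - y) ^ q) := by
    have := ((integrable_exp_sq (d := d) hb).comp_sub_left x).const_mul (τ ^ (-(d : ℝ) / 2 * q))
    refine this.congr (Filter.Eventually.of_forall fun y => ?_)
    simp only [gk_rpow hτ]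
  have hgint : ∫ y, gk τ (x - y) ^ q = τ ^ (-(d : ℝ) / 2 * q) * (Real.pi / (q / τ)) ^ ((d : ℝ) / 2) := by
    rw [integral_sub_left_eq_self (fun z => gk τ z ^ q) volume x]
    simp only [gk_rpow hτ]
    rw [integral_const_mul, integral_exp_sq hb]
  have hgc : Continuous (fun y => gk τ (x - y)) := (gk_cont (d := d) _).comp (continuous_const.sub continuous_id)
  have hgm : MemLp (fun y => gk τ (x - y)) (ENNReal.ofReal q) := by
    rw [← integrable_norm_rpow_iff hgc.aestronglyMeasurable (by simpa using hq0) (by simp),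
      ENNReal.toReal_ofReal hq0.le]
    refine hgi.congr (Filter.Eventually.of_forall fun y => ?_)
    simp only [Real.norm_of_nonneg (gk_pos hτ (x - y)).le]
  have H := integral_mul_le_Lp_mul_Lq_of_nonneg hpq
    (Filter.Eventually.of_forall fun y => (gk_pos hτ (x - y)).le)
    (Filter.Eventually.of_forall hw0) hgm hw
  have hN : (eLpNorm w (ENNReal.ofReal p) volume).toReal = (∫ y, w y ^ p) ^ (1 / p) := by
    rw [hw.eLpNorm_eq_integral_rpow_norm (by simp; linarith) (by simp),
      ENNReal.toReal_ofReal (r := p) (by linarith), ENNReal.toReal_ofReal, one_div]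
    · simp only [Real.norm_of_nonneg (hw0 _)]
    · exact Real.rpow_nonneg (integral_nonneg fun y => Real.rpow_nonneg (norm_nonneg _) _) _
  rw [← hN, hgint] at H
  have e : (τ ^ (-(d : ℝ) / 2 * q) * (Real.pi / (q / τ)) ^ ((d : ℝ) / 2)) ^ (1 / q) =
      (Real.pi * l / d) ^ (l / 2) * τ ^ (-(((d : ℝ) - l) / 2)) := by
    have e1 : Real.pi / (q / τ) = (Real.pi * l / d) * τ := by rw [hq]; field_simp
    rw [e1, Real.mul_rpow (by positivity) (by positivity), ← Real.rpow_mul hτ.le,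
      ← Real.rpow_mul (by positivity), Real.mul_rpow (by positivity) hτ.le]
    have e2 : -(d : ℝ) / 2 * q * (1 / q) = -(d : ℝ) / 2 := by field_simp
    have e3 : (d : ℝ) / 2 * (1 / q) = l / 2 := by rw [hq]; field_simp
    rw [e2, e3, mul_comm, mul_assoc, ← Real.rpow_add hτ]
    congr 2; ring
  rw [e] at H
  have H' : gc τ w x ≤ _ := H
  calc _ ≤ τ ^ (((d : ℝ) - l) / 2) * _ := mul_le_mul_of_nonneg_left H' (by positivity)
    _ = (τ ^ (((d : ℝ) - l) / 2) * τ ^ (-(((d : ℝ) - l) / 2))) * _ := by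
        rw [mul_comm ((Real.pi * l / d) ^ (l / 2)) _, mul_assoc, ← mul_assoc]
    _ = _ := by rw [← Real.rpow_add hτ]; simp

lemma mk_linsol {d : ℕ} {l σ κ T : ℝ} (hd : 1 ≤ d) (hl : 0 ≤ l) (hld : l < (d : ℝ))
    {w : ℝ → Eu d → ℝ} {f : Eu d → ℝ} (hf : ContDiff ℝ (⊤ : ℕ∞) f)
    (hfc : HasCompactSupport f) {V : Eu d → ℝ}
    (hV : ∀ z, V z = ∫ y, f (z - y) * ‖y‖ ^ (-l))
    (H : IsAggregationSolution σ κ T (gradient V) w) :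
    ∃ K, LinSol σ κ T K (fun t z => ∫ y, w t y • gradient V (z - y)) w := by
  obtain ⟨h1, h2, h3, h4, h5⟩ := H
  obtain ⟨-, hG, K, hK, hK1, hK2⟩ := V_props hd hl hld hf hfc hV
  have hS : ∀ t ∈ Icc (0:ℝ) T, ContDiff ℝ (⊤ : ℕ∞) (w t) ∧ Integrable (w t) := by
    intro t ht
    obtain ⟨S, hS⟩ := h2 t ht
    have : w t = S := funext hS
    rw [this]
    exact ⟨S.smooth ⊤, S.integrable⟩
  refine ⟨K, h1, fun t ht => (hS t ht).1, fun t ht => (hS t ht).2, h3, h4,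
    fun t ht => b_C1 (hS t ht).2 (hS t ht).1.continuous hG hK1 hK2, fun t ht x => ?_, h5⟩
  have := norm_integral_le_of_norm_le (f := fun y => w t y • gradient V (x - y))
    ((hS t ht).2.mul_const K) (Filter.Eventually.of_forall fun y => by
      rw [norm_smul, Real.norm_of_nonneg (h3 t ht y)]
      exact mul_le_mul_of_nonneg_left (hK1 _) (h3 t ht y))
  rw [integral_mul_const, h4 t ht, one_mul] at this
  exact this

lemma moll {d : ℕ} {χ : Eu d → ℝ} {η : ℝ} (hη : 0 < η) (h1 : ContDiff ℝ (⊤ : ℕ∞) χ)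
    (h2 : HasCompactSupport χ) (h3 : ∀ x, 0 ≤ χ x) (h4 : (∫ x, χ x) = 1) :
    ContDiff ℝ (⊤ : ℕ∞) (fun z => η ^ (-(d : ℝ)) * χ (η⁻¹ • z)) ∧
    HasCompactSupport (fun z => η ^ (-(d : ℝ)) * χ (η⁻¹ • z)) ∧
    (∀ z, 0 ≤ η ^ (-(d : ℝ)) * χ (η⁻¹ • z)) ∧ (∫ z, η ^ (-(d : ℝ)) * χ (η⁻¹ • z)) = 1 := by
  refine ⟨?_, ?_, fun z => mul_nonneg (by positivity) (h3 _), ?_⟩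
  · have : ContDiff ℝ (⊤ : ℕ∞) (fun z : Eu d => χ (η⁻¹ • z)) := h1.comp (contDiff_const_smul _)
    exact contDiff_const.mul this
  · exact (h2.comp_smul (inv_ne_zero hη.ne')).mul_left
  · rw [integral_const_mul, Measure.integral_comp_smul, h4]
    simp only [finrank_euclideanSpace, Fintype.card_fin, smul_eq_mul, mul_one]
    rw [Real.rpow_neg hη.le, Real.rpow_natCast, inv_pow, inv_inv, abs_of_pos (by positivity)]
    field_simp

theorem final_thm
    (d : ℕ) (hd : 3 ≤ d) (lam : ℝ) (hlam0 : 0 < lam) (hlamd : lam < (d : ℝ) - 2)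
    (σ : ℝ) (hσ : 0 < σ) :
    ∃ Cstar : ℝ, 0 < Cstar ∧
      ∀ (T : ℝ), 0 < T →
      ∀ (M : ℝ), 0 < M →
      ∀ (χ : EuclideanSpace ℝ (Fin d) → ℝ),
        ContDiff ℝ (⊤ : ℕ∞) χ → HasCompactSupport χ → (∀ x, 0 ≤ χ x) → (∫ x, χ x) = 1 →
      ∃ C : ℝ, 0 < C ∧
        ∀ (κ : ℝ), (κ = 1 ∨ κ = -1) →
        ∀ (η : ℝ), 0 < η →
        ∀ (w : ℝ → EuclideanSpace ℝ (Fin d) → ℝ),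
          IsAggregationSolution σ κ T (gradient (Veta lam χ η)) w →
          eLpNorm (w 0) (ENNReal.ofReal ((d : ℝ) / ((d : ℝ) - lam))) volume
            < ENNReal.ofReal Cstar →
          (eLpNorm (w 0) 1 volume).toReal + (eLpNorm (w 0) ⊤ volume).toReal ≤ M →
        ∀ t ∈ Icc (0:ℝ) T,
          eLpNorm (w t) ⊤ volume ≤ ENNReal.ofReal C := by
  have hG : 0 < Real.Gamma ((lam + 1) / 2) := Real.Gamma_pos_of_pos (by linarith)
  have hdr : (3:ℝ) ≤ d := by exact_mod_cast hd
  have hpi := Real.pi_pos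
  obtain ⟨c2, hc2⟩ : ∃ c2 : ℝ, c2 = 8 * lam / Real.Gamma ((lam + 1) / 2) := ⟨_, rfl⟩
  have hc20 : 0 < c2 := by rw [hc2]; positivity
  have hs4 : 0 < √(4 * σ) := Real.sqrt_pos.2 (by positivity)
  have hs1 : 0 < √σ := Real.sqrt_pos.2 hσ
  obtain ⟨A, hA⟩ : ∃ A : ℝ, A = 2 * 2 ^ ((d : ℝ) / 2) * (1 / √(4 * σ)) * (4 * √2) := ⟨_, rfl⟩
  have hA0 : 0 < A := by rw [hA]; positivity
  obtain ⟨ε, hε⟩ : ∃ ε : ℝ, ε = 1 / (3 * A) := ⟨_, rfl⟩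
  have hε0 : 0 < ε := by rw [hε]; positivity
  obtain ⟨e0, he0⟩ : ∃ e0 : ℝ, e0 = ε * √σ / (2 * c2) := ⟨_, rfl⟩
  have he00 : 0 < e0 := by rw [he0]; positivity
  have hεe : ε = 2 * c2 * e0 / √σ := by rw [he0]; field_simp
  have hsm : 2 * 2 ^ ((d : ℝ) / 2) * (1 / √(4 * σ)) * (4 * √2) * ε * 3 ≤ 1 := by
    rw [← hA, hε]; apply le_of_eq; field_simp
  have hCH : 0 < (Real.pi * lam / d) ^ (lam / 2) := by positivity
  refine ⟨e0 / (Real.pi * lam / d) ^ (lam / 2), by positivity, fun T hT M hM χ hχ1 hχ2 hχ3 hχ4 =>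
    ⟨2 * M, by positivity, fun κ hκ η hη w H hN hM' => ?_⟩⟩
  obtain ⟨f1, f2, f3, f4⟩ := moll hη hχ1 hχ2 hχ3 hχ4
  have hV : ∀ z, Veta lam χ η z = ∫ y, (fun z => η ^ (-(d : ℝ)) * χ (η⁻¹ • z)) (z - y) * ‖y‖ ^ (-lam) :=
    fun z => rfl
  obtain ⟨K, HL⟩ := mk_linsol (by omega) hlam0.le (by linarith) f1 f2 hV H
  have h0T : (0:ℝ) ∈ Icc 0 T := ⟨le_rfl, hT.le⟩
  have hκ' : |κ| ≤ 1 := by rcases hκ with rfl | rfl <;> simp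
  have ctl := drift_ctl (σ := σ) (T := T) (by omega) hlam0 hlamd hσ HL.wint
    (fun t ht => (HL.wsm t ht).continuous) HL.nonneg HL.mass f1 f2 f3 f4 hV
  rw [← hc2] at ctl
  obtain ⟨S, hS⟩ := H.2.1 0 h0T
  have hwS : w 0 = S := funext hS
  have hinit : ∀ τ, 0 < τ → ∀ x, τ ^ (((d : ℝ) - lam) / 2) * gc τ (w 0) x ≤ e0 := by
    intro τ hτ x
    have hm : MemLp (w 0) (ENNReal.ofReal ((d : ℝ) / ((d : ℝ) - lam))) := by
      rw [hwS]; exact S.memLp _ _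
    refine (holder_init (by omega) hlam0 (by linarith) hτ (HL.nonneg 0 h0T) hm x).trans ?_
    have := (ENNReal.toReal_mono ENNReal.ofReal_ne_top hN.le)
    rw [ENNReal.toReal_ofReal (by positivity), le_div_iff₀ hCH] at this
    linarith
  have hb := bootstrap HL hσ hκ' hT (by linarith) (by linarith) hc20 he00 hεe hsm ctl hinit
  have hw0 : ∀ x, w 0 x ≤ M := by
    have hm : MemLp (w 0) ⊤ := by rw [hwS]; exact S.memLp _ _
    have hae : ∀ᵐ x, w 0 x ≤ M := by
      have h1 := ae_le_eLpNormEssSup (f := w 0) (μ := volume)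
      filter_upwards [h1] with x hx
      rw [← eLpNorm_exponent_top] at hx
      have h2 := ENNReal.toReal_mono hm.2.ne hx
      have h3 : w 0 x ≤ ‖w 0 x‖ := le_abs_self _
      simp only [toReal_enorm] at h2
      have : 0 ≤ (eLpNorm (w 0) 1 volume).toReal := ENNReal.toReal_nonneg
      linarith
    have hcl : IsClosed {x | w 0 x ≤ M} :=
      isClosed_le (HL.wsm 0 h0T).continuous continuous_const
    have hden : Dense {x | w 0 x ≤ M} := Measure.dense_of_ae hae
    intro x
    have := hden x
    rwa [hcl.closure_eq] at this
  have hfin := stepB HL hσ hκ' hT hM.le hε0.le hsm hb hw0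
  intro t ht
  rw [eLpNorm_exponent_top]
  refine eLpNormEssSup_le_of_ae_bound (Filter.Eventually.of_forall fun x => ?_)
  rw [Real.norm_of_nonneg (HL.nonneg t ht x)]
  exact hfin t ht x

/-- Uniform-in-`η` `L^∞` bound for the intermediate equation: for `d ≥ 3`,
`0 < λ < d-2`, `σ > 0` there is `C* > 0` depending only on `d`, `λ`, `σ`, and for every
`T > 0`, `M > 0` and mollifier `χ` a constant `C > 0` depending only on
`d`, `λ`, `σ`, `T`, `M`, `χ`, such that every classical Schwartz-class solution `w` of
`∂_t w = σΔw − κ div(w ∇V^η * w)` on `[0,T]` with `‖w(0)‖_{L^{p*}} < C*` and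
`‖w(0)‖_{L¹} + ‖w(0)‖_{L^∞} ≤ M` satisfies `sup_{0≤t≤T} ‖w(t)‖_{L^∞} ≤ C`. -/
theorem intermediate_equation_Linfty_bound
    (d : ℕ) (hd : 3 ≤ d) (lam : ℝ) (hlam0 : 0 < lam) (hlamd : lam < (d : ℝ) - 2)
    (σ : ℝ) (hσ : 0 < σ) :
    ∃ Cstar : ℝ, 0 < Cstar ∧
      ∀ (T : ℝ), 0 < T →
      ∀ (M : ℝ), 0 < M →
      ∀ (χ : EuclideanSpace ℝ (Fin d) → ℝ),
        ContDiff ℝ (⊤ : ℕ∞) χ → HasCompactSupport χ → (∀ x, 0 ≤ χ x) → (∫ x, χ x) = 1 →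
      ∃ C : ℝ, 0 < C ∧
        ∀ (κ : ℝ), (κ = 1 ∨ κ = -1) →
        ∀ (η : ℝ), 0 < η →
        ∀ (w : ℝ → EuclideanSpace ℝ (Fin d) → ℝ),
          IsAggregationSolution σ κ T (gradient (Veta lam χ η)) w →
          eLpNorm (w 0) (ENNReal.ofReal ((d : ℝ) / ((d : ℝ) - lam))) volume
            < ENNReal.ofReal Cstar →
          (eLpNorm (w 0) 1 volume).toReal + (eLpNorm (w 0) ⊤ volume).toReal ≤ M →
        ∀ t ∈ Icc (0:ℝ) T,
          eLpNorm (w t) ⊤ volume ≤ ENNReal.ofReal C := by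
  exact final_thm d hd lam hlam0 hlamd σ hσ
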